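/- arXiv:1608.06730 — 2 statements merged into one kernel-verified Lean document; each statement's English description precedes it below -/
import Mathlib

section
/- Let 2 ≤ q < ∞ and p satisfy 1/p + 1/q = 1/2. There exists a constant C > 0 such that for every Schwartz function u₀ on ℝ³ the free KP-II evolution u(t) = S(t)u₀ satisfies ‖u‖_{L^p_t L^q_{x,y}(ℝ×ℝ³)} ≤ C ‖ |D_x|^{2/p} u₀ ‖_{L²(ℝ³)}, where |D_x|^s denotes the Fourier multiplier with symbol |ξ|^s and the mixed norm is ‖u‖_{L^p_t L^q_{x,y}} = ( ∫_ℝ ‖u(t,·)‖_{L^q(ℝ³)}^p dt )^{1/p} (with the usual modification for p = ∞). -/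
/-!
STATEMENT 1: Strichartz estimate for the free 3D KP-II evolution,
2 ≤ q < ∞, 1/p + 1/q = 1/2:
‖S(t)u₀‖_{L^p_t L^q_{x,y}} ≤ C ‖|D_x|^{2/p} u₀‖_{L²}.
The norm ‖|D_x|^s u₀‖_{L²} is expressed (via Plancherel) as the L² norm of
|ξ|^s û₀ on the Fourier side.
-/

noncomputable section

open MeasureTheory Filter
open scoped ENNReal

abbrev E2 := EuclideanSpace ℝ (Fin 2)

/-- (Nonunitary) Fourier transform on ℝ × ℝ². -/
def ft (f : ℝ × E2 → ℂ) (ζ : ℝ × E2) : ℂ :=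
  ∫ z : ℝ × E2, Complex.exp (-Complex.I * ((z.1 * ζ.1 + inner ℝ z.2 ζ.2 : ℝ) : ℂ)) * f z

/-- KP-II dispersion relation ω(ξ,η) = ξ³ − |η|²/ξ. -/
def omega (ζ : ℝ × E2) : ℝ := ζ.1 ^ 3 - ‖ζ.2‖ ^ 2 / ζ.1

/-- Free KP-II evolution u(t) = S(t)u₀ of Schwartz data, as inverse Fourier
integral of e^{itω(ξ,η)} û₀(ξ,η). -/
def kpEvol (u₀ : SchwartzMap (ℝ × E2) ℂ) (t : ℝ) (z : ℝ × E2) : ℂ :=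
  ∫ ζ : ℝ × E2,
    Complex.exp (Complex.I * ((t * omega ζ + z.1 * ζ.1 + inner ℝ z.2 ζ.2 : ℝ) : ℂ)) * ft (fun w => u₀ w) ζ

/-- `L^p` norm (in `ℝ≥0∞`) of an `ℝ≥0∞`-valued function, with the usual
modification for `p = ∞`. -/
def lpENN {ι : Type*} [MeasurableSpace ι] (μ : Measure ι) (p : ℝ≥0∞) (f : ι → ℝ≥0∞) : ℝ≥0∞ :=
  if p = ∞ then essSup f μ else (∫⁻ t, f t ^ p.toReal ∂μ) ^ (1 / p.toReal)

/-- Mixed norm ‖u‖_{L^p_t L^q_{x,y}}. -/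
def mixedNorm (p q : ℝ≥0∞) (u : ℝ → ℝ × E2 → ℂ) : ℝ≥0∞ :=
  lpENN volume p fun t => eLpNorm (u t) q volume


open Complex in
theorem kp_TT {S V : Type*} [MeasurableSpace S] (μ : Measure S) [SFinite μ]
    [NormedAddCommGroup V] [InnerProductSpace ℝ V] [FiniteDimensional ℝ V] [MeasurableSpace V] [BorelSpace V]
    (A : S → V → ℂ) (hA : StronglyMeasurable (Function.uncurry A)) (b : S → ℝ) (hb : Integrable b μ)
    (hAb : ∀ s η, ‖A s η‖ ≤ b s) (M : ℝ≥0∞)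
    (hM : ∀ ε : ℝ, 0 < ε → ∫⁻ s, ∫⁻ s', ‖∫ η : V, cexp (-(ε : ℂ) * ‖η‖ ^ 2) *
      (A s η * (starRingEnd ℂ) (A s' η))‖ₑ ∂μ ∂μ ≤ M) :
    ∫⁻ η, ‖∫ s, A s η ∂μ‖ₑ ^ 2 ≤ M := by
  have hb0 : ∀ s, 0 ≤ b s := fun s => (norm_nonneg _).trans (hAb s 0)
  set Φ : V → ℂ := fun η => ∫ s, A s η ∂μ with hΦ
  have hΦm : StronglyMeasurable Φ := by
    have := StronglyMeasurable.integral_prod_left' (μ := μ) (f := fun p : S × V => A p.1 p.2) hA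
    simpa using this
  have hAi : ∀ η, Integrable (fun s => A s η) μ := fun η =>
    hb.mono' ((hA.comp_measurable (measurable_id.prodMk measurable_const)).aestronglyMeasurable)
      (Eventually.of_forall fun s => hAb s η)
  have key : ∀ ε : ℝ, 0 < ε → ∫⁻ η, ENNReal.ofReal (Real.exp (-ε * ‖η‖ ^ 2)) * ‖Φ η‖ₑ ^ 2 ≤ M := by
    intro ε hε
    have hG : Integrable (fun η : V => cexp (-(ε : ℂ) * ‖η‖ ^ 2)) := by
      have := GaussianFourier.integrable_cexp_neg_mul_sq_norm_add (V := V) (b := (ε:ℂ)) (by simpa using hε) 0 0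
      simpa using this
    have hGn : ∀ η : V, ‖cexp (-(ε : ℂ) * ‖η‖ ^ 2)‖ = Real.exp (-ε * ‖η‖ ^ 2) := by
      intro η
      rw [Complex.norm_exp]; congr 1
      rw [← ofReal_neg, ← ofReal_pow, ← ofReal_mul, ofReal_re]
    have hΦb : ∀ η, ‖Φ η‖ ≤ ∫ s, b s ∂μ := fun η =>
      norm_integral_le_of_norm_le hb (Eventually.of_forall fun s => hAb s η)
    set B := ∫ s, b s ∂μ
    -- the integral
    have h1 : ∫⁻ η, ENNReal.ofReal (Real.exp (-ε * ‖η‖ ^ 2)) * ‖Φ η‖ₑ ^ 2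
        = ‖∫ η, cexp (-(ε : ℂ) * ‖η‖ ^ 2) * (Φ η * (starRingEnd ℂ) (Φ η))‖ₑ := by
      have e1 : ∀ η : V, cexp (-(ε : ℂ) * ‖η‖ ^ 2) * (Φ η * (starRingEnd ℂ) (Φ η)) =
          ((Real.exp (-ε * ‖η‖ ^ 2) * ‖Φ η‖ ^ 2 : ℝ) : ℂ) := by
        intro η
        rw [Complex.mul_conj, Complex.normSq_eq_norm_sq]; push_cast; rfl
      simp_rw [e1]
      rw [integral_complex_ofReal]
      have hi : Integrable (fun η : V => Real.exp (-ε * ‖η‖ ^ 2) * ‖Φ η‖ ^ 2) := by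
        have : Integrable (fun η : V => Real.exp (-ε * ‖η‖ ^ 2)) := by
          refine hG.norm.congr (Eventually.of_forall fun η => hGn η)
        refine this.mul_bdd (c := B^2) (hΦm.norm.pow 2).aestronglyMeasurable (Eventually.of_forall fun η => ?_)
        rw [norm_pow, norm_norm]; gcongr; exact hΦb η
      have h0 : ∀ η : V, 0 ≤ Real.exp (-ε * ‖η‖ ^ 2) * ‖Φ η‖ ^ 2 := fun η => by positivity
      rw [← ofReal_norm_eq_enorm, Complex.norm_of_nonneg (integral_nonneg h0),
        ofReal_integral_eq_lintegral_ofReal hi (Eventually.of_forall h0)]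
      refine lintegral_congr fun η => ?_
      rw [ENNReal.ofReal_mul (Real.exp_pos _).le, ENNReal.ofReal_pow (norm_nonneg _), ofReal_norm_eq_enorm]
    rw [h1]
    refine le_trans ?_ (hM ε hε)
    have hAc : StronglyMeasurable (fun p : S × V => (starRingEnd ℂ) (A p.1 p.2)) :=
      Complex.continuous_conj.comp_stronglyMeasurable hA
    have hGm : StronglyMeasurable (fun η : V => cexp (-(ε : ℂ) * ‖η‖ ^ 2)) :=
      Continuous.stronglyMeasurable (by fun_prop)
    -- expand
    have h2 : ∫ η, cexp (-(ε : ℂ) * ‖η‖ ^ 2) * (Φ η * (starRingEnd ℂ) (Φ η))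
        = ∫ η, ∫ s, cexp (-(ε : ℂ) * ‖η‖ ^ 2) * (A s η * (starRingEnd ℂ) (Φ η)) ∂μ := by
      congr 1; ext η
      rw [integral_const_mul, integral_mul_const]
    have h3 : ∫ η, ∫ s, cexp (-(ε : ℂ) * ‖η‖ ^ 2) * (A s η * (starRingEnd ℂ) (Φ η)) ∂μ
        = ∫ s, (∫ η, cexp (-(ε : ℂ) * ‖η‖ ^ 2) * (A s η * (starRingEnd ℂ) (Φ η))) ∂μ := by
      apply integral_integral_swap
      have : Integrable (fun p : V × S => (Real.exp (-ε * ‖p.1‖ ^ 2) * B) * b p.2) (volume.prod μ) :=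
        Integrable.mul_prod (((hG.norm.congr (Eventually.of_forall fun η => hGn η))).mul_const B) hb
      refine this.mono' ?_ (Eventually.of_forall fun p => ?_)
      · refine (StronglyMeasurable.mul (hGm.comp_measurable measurable_fst) (StronglyMeasurable.mul ?_ ?_)).aestronglyMeasurable
        · exact hA.comp_measurable measurable_swap
        · exact (Complex.continuous_conj.comp_stronglyMeasurable hΦm).comp_measurable measurable_fst
      · simp only [Function.uncurry]
        rw [norm_mul, norm_mul, hGn, RCLike.norm_conj, mul_assoc]
        rw [mul_comm B]
        have := hAb p.2 p.1
        have := hΦb p.1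
        have := hb0 p.2
        gcongr
    have h4 : ∀ s, ∫ η, cexp (-(ε : ℂ) * ‖η‖ ^ 2) * (A s η * (starRingEnd ℂ) (Φ η))
        = ∫ s', (∫ η, cexp (-(ε : ℂ) * ‖η‖ ^ 2) * (A s η * (starRingEnd ℂ) (A s' η))) ∂μ := by
      intro s
      have : ∫ η, cexp (-(ε : ℂ) * ‖η‖ ^ 2) * (A s η * (starRingEnd ℂ) (Φ η)) =
         ∫ η, ∫ s', cexp (-(ε : ℂ) * ‖η‖ ^ 2) * (A s η * (starRingEnd ℂ) (A s' η)) ∂μ := by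
        congr 1; ext η
        rw [integral_const_mul, integral_const_mul, integral_conj]
      rw [this]
      apply integral_integral_swap
      have : Integrable (fun p : V × S => (Real.exp (-ε * ‖p.1‖ ^ 2) * b s) * b p.2) (volume.prod μ) :=
        Integrable.mul_prod (((hG.norm.congr (Eventually.of_forall fun η => hGn η))).mul_const (b s)) hb
      refine this.mono' ?_ (Eventually.of_forall fun p => ?_)
      · refine (StronglyMeasurable.mul (hGm.comp_measurable measurable_fst) (StronglyMeasurable.mul ?_ ?_)).aestronglyMeasurable
        · exact hA.comp_measurable (measurable_const.prodMk measurable_fst)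
        · exact hAc.comp_measurable measurable_swap
      · simp only [Function.uncurry]
        rw [norm_mul, norm_mul, hGn, RCLike.norm_conj, mul_assoc]
        have := hAb p.2 p.1
        have := hAb s p.1
        have := hb0 s
        gcongr
    rw [h2, h3]
    refine (enorm_integral_le_lintegral_enorm _).trans (lintegral_mono fun s => ?_)
    rw [h4 s]
    exact enorm_integral_le_lintegral_enorm _
  -- limit
  have hlim : ∀ η : V, ‖Φ η‖ₑ ^ 2 = liminf (fun n : ℕ => ENNReal.ofReal (Real.exp (-(1/((n:ℝ)+1)) * ‖η‖ ^ 2)) * ‖Φ η‖ₑ ^ 2) atTop := by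
    intro η
    symm
    apply Tendsto.liminf_eq
    have h1 : Tendsto (fun n : ℕ => Real.exp (-(1/((n:ℝ)+1)) * ‖η‖ ^ 2)) atTop (nhds 1) := by
      have := (tendsto_one_div_add_atTop_nhds_zero_nat (𝕜 := ℝ)).neg.mul_const (‖η‖^2)
      simpa [Function.comp_def] using (Real.continuous_exp.tendsto _).comp this
    have h2 := ENNReal.tendsto_ofReal h1
    have h3 := ENNReal.Tendsto.mul_const (b := ‖Φ η‖ₑ ^ 2) h2 (Or.inl (by simp))
    simpa using h3
  calc ∫⁻ η, ‖Φ η‖ₑ ^ 2 = ∫⁻ η, liminf (fun n : ℕ => ENNReal.ofReal (Real.exp (-(1/((n:ℝ)+1)) * ‖η‖ ^ 2)) * ‖Φ η‖ₑ ^ 2) atTop := lintegral_congr hlim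
    _ ≤ liminf (fun n : ℕ => ∫⁻ η, ENNReal.ofReal (Real.exp (-(1/((n:ℝ)+1)) * ‖η‖ ^ 2)) * ‖Φ η‖ₑ ^ 2) atTop := by
      apply lintegral_liminf_le
      intro n
      have := hΦm.measurable
      fun_prop
    _ ≤ M := by
      refine liminf_le_of_le (by isBoundedDefault) fun c hc => ?_
      obtain ⟨n, hn⟩ := hc.exists
      exact hn.trans (key _ (by positivity))


def kpFT {V : Type*} [NormedAddCommGroup V] [InnerProductSpace ℝ V] [MeasurableSpace V] [BorelSpace V]
    [FiniteDimensional ℝ V] (h : V → ℂ) (y : V) : ℂ :=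
  ∫ η, Complex.exp (Complex.I * ((inner ℝ y η : ℝ) : ℂ)) * h η

theorem kp_norm_expI (x : ℝ) : ‖Complex.exp (Complex.I * (x : ℂ))‖ = 1 := by
  rw [mul_comm]; exact Complex.norm_exp_ofReal_mul_I x

theorem kp_mul_le (a b : ℝ≥0∞) : a * b ≤ a ^ 2 + b ^ 2 := by
  rcases le_total a b with h | h
  · calc a * b ≤ b * b := by gcongr
      _ = b^2 := (sq b).symm
      _ ≤ _ := le_add_self
  · calc a * b ≤ a * a := by gcongr
      _ = a^2 := (sq a).symm
      _ ≤ _ := le_self_add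

open Complex in
theorem kp_plancherel {V : Type*} [NormedAddCommGroup V] [InnerProductSpace ℝ V] [MeasurableSpace V] [BorelSpace V]
    [FiniteDimensional ℝ V] (h : V → ℂ) (hm : StronglyMeasurable h) (hi : Integrable h) :
    ∫⁻ y, ‖kpFT h y‖ₑ ^ 2 ≤ ENNReal.ofReal (2 * (2 * Real.pi) ^ (Module.finrank ℝ V)) * ∫⁻ η, ‖h η‖ₑ ^ 2 := by
  set d := Module.finrank ℝ V with hd
  refine kp_TT volume (fun s η => cexp (I * ((inner ℝ η s : ℝ) : ℂ)) * h s) ?_ (fun s => ‖h s‖) hi.norm ?_ _ ?_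
  · refine StronglyMeasurable.mul (Continuous.stronglyMeasurable (by fun_prop)) (hm.comp_measurable measurable_fst)
  · intro s η
    rw [norm_mul, kp_norm_expI, one_mul]
  · intro ε hε
    have hG : ∀ w : V, ‖∫ η : V, cexp (-(ε : ℂ) * ‖η‖ ^ 2 + I * (inner ℝ w η : ℝ))‖ₑ =
        ENNReal.ofReal ((Real.pi/ε)^((d:ℝ)/2) * Real.exp (- (1/(4*ε)) * ‖w‖^2)) := by
      intro w
      rw [GaussianFourier.integral_cexp_neg_mul_sq_norm_add (by simpa using hε), ← ofReal_norm_eq_enorm, norm_mul]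
      congr 2
      · rw [← ofReal_div, ← hd]
        have : ((d:ℂ)/2) = (((d:ℝ)/2 : ℝ):ℂ) := by push_cast; rfl
        rw [this, ← ofReal_cpow (by positivity), Complex.norm_of_nonneg (by positivity)]
      · rw [Complex.norm_exp]; congr 1
        have : I ^ 2 * (‖w‖:ℂ) ^ 2 / (4 * (ε:ℂ)) = ((- (1/(4*ε)) * ‖w‖^2 : ℝ) : ℂ) := by
          rw [I_sq]; push_cast; ring
        rw [this, ofReal_re]
    have hGi : ∫⁻ w : V, ENNReal.ofReal ((Real.pi/ε)^((d:ℝ)/2) * Real.exp (- (1/(4*ε)) * ‖w‖^2))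
        = ENNReal.ofReal ((2 * Real.pi) ^ d) := by
      have hint : Integrable (fun w : V => Real.exp (- (1/(4*ε)) * ‖w‖^2)) := by
        have := GaussianFourier.integrable_cexp_neg_mul_sq_norm_add (V := V) (b := ((1/(4*ε) : ℝ):ℂ)) (by rw [ofReal_re]; positivity) 0 0
        refine this.norm.congr (Eventually.of_forall fun η => ?_)
        simp only [zero_mul, add_zero]
        rw [Complex.norm_exp, ← ofReal_neg, ← ofReal_pow, ← ofReal_mul, ofReal_re]
      rw [← ofReal_integral_eq_lintegral_ofReal (hint.const_mul _) (Eventually.of_forall fun w => by positivity),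
        integral_const_mul, GaussianFourier.integral_rexp_neg_mul_sq_norm (by positivity), ← hd,
        ← Real.mul_rpow (by positivity) (by positivity)]
      congr 1
      have : Real.pi / ε * (Real.pi / (1 / (4 * ε))) = (2 * Real.pi)^2 := by field_simp; ring
      rw [this, ← Real.rpow_natCast, ← Real.rpow_natCast (2*Real.pi), ← Real.rpow_mul (by positivity)]
      congr 1; push_cast; ring
    set K : V → ℝ≥0∞ := fun w => ENNReal.ofReal ((Real.pi/ε)^((d:ℝ)/2) * Real.exp (- (1/(4*ε)) * ‖w‖^2)) with hK
    have hKm : Measurable K := by fun_prop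
    have hhm : Measurable (fun s => ‖h s‖ₑ) := hm.measurable.enorm
    have e1 : ∀ s s', ‖∫ η : V, cexp (-(ε : ℂ) * ‖η‖ ^ 2) *
      (cexp (I * ((inner ℝ η s : ℝ) : ℂ)) * h s * (starRingEnd ℂ) (cexp (I * ((inner ℝ η s' : ℝ) : ℂ)) * h s'))‖ₑ
       = ‖h s‖ₑ * ‖h s'‖ₑ * K (s - s') := by
      intro s s'
      have : ∀ η : V, cexp (-(ε : ℂ) * ‖η‖ ^ 2) *
        (cexp (I * ((inner ℝ η s : ℝ) : ℂ)) * h s * (starRingEnd ℂ) (cexp (I * ((inner ℝ η s' : ℝ) : ℂ)) * h s')) =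
        (h s * (starRingEnd ℂ) (h s')) * cexp (-(ε : ℂ) * ‖η‖ ^ 2 + I * (inner ℝ (s - s') η : ℝ)) := by
        intro η
        rw [map_mul, ← Complex.exp_conj, map_mul, conj_I, conj_ofReal, inner_sub_left, real_inner_comm s, real_inner_comm s', ofReal_sub,
          mul_sub, sub_eq_add_neg, Complex.exp_add, Complex.exp_add, neg_mul I]
        ring
      simp_rw [this]
      rw [integral_const_mul, enorm_mul, enorm_mul, hG]
      congr 2
      rw [← ofReal_norm_eq_enorm, RCLike.norm_conj, ofReal_norm_eq_enorm]
    simp_rw [e1]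
    calc ∫⁻ s, ∫⁻ s', ‖h s‖ₑ * ‖h s'‖ₑ * K (s - s')
        ≤ ∫⁻ s, ∫⁻ s', (‖h s‖ₑ ^ 2 * K (s - s') + ‖h s'‖ₑ ^ 2 * K (s - s')) := by
          gcongr with s s'
          rw [← add_mul]; gcongr; exact kp_mul_le _ _
      _ = (∫⁻ s, ∫⁻ s', ‖h s‖ₑ ^ 2 * K (s - s')) + ∫⁻ s, ∫⁻ s', ‖h s'‖ₑ ^ 2 * K (s - s') := by
          rw [← lintegral_add_left]
          · congr 1; ext s
            rw [lintegral_add_left (by fun_prop)]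
          · exact Measurable.lintegral_prod_right' (f := fun p : V × V => ‖h p.1‖ₑ ^ 2 * K (p.1 - p.2)) (by fun_prop)
      _ = (∫⁻ s, ∫⁻ s', ‖h s‖ₑ ^ 2 * K (s - s')) + ∫⁻ s', ∫⁻ s, ‖h s'‖ₑ ^ 2 * K (s - s') := by
          congr 1
          rw [lintegral_lintegral_swap]
          exact (by fun_prop : Measurable (fun p : V × V => ‖h p.2‖ₑ ^ 2 * K (p.1 - p.2))).aemeasurable
      _ = (∫⁻ s, ‖h s‖ₑ ^ 2) * ENNReal.ofReal ((2 * Real.pi) ^ d) + (∫⁻ s, ‖h s‖ₑ ^ 2) * ENNReal.ofReal ((2 * Real.pi) ^ d) := by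
          rw [← lintegral_mul_const _ (by fun_prop)]
          congr 1
          · congr 1; ext s
            rw [lintegral_const_mul _ (by fun_prop), lintegral_sub_left_eq_self K s, hGi]
          · congr 1; ext s
            rw [lintegral_const_mul _ (by fun_prop), lintegral_sub_right_eq_self K s, hGi]
      _ = _ := by
          rw [← two_mul, ENNReal.ofReal_mul (by norm_num)]
          simp; ring


theorem kp_interp {α β : Type*} [MeasurableSpace α] [MeasurableSpace β] (ν : Measure α) (μ : Measure β)
    (q : ℝ) (hq : 2 < q) (φ : α → ℝ) (hφ0 : ∀ a, 0 ≤ φ a) (hφ : Measurable φ) (f : β → ℂ) (hf : Measurable f)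
    (D : ℝ≥0∞) (hD : D ≠ ∞)
    (H : ∀ t : ℝ, 0 < t → ∃ u v : β → ℂ, Measurable v ∧ (∀ y, f y = u y + v y) ∧ (∀ y, ‖u y‖ ≤ t / 2) ∧
      ∫⁻ y, ‖v y‖ₑ ^ 2 ∂μ ≤ D * ν {a | t ≤ φ a}) :
    ∫⁻ y, ‖f y‖ₑ ^ q ∂μ ≤ ENNReal.ofReal (4 * q / (q - 2)) * D * ∫⁻ a, ENNReal.ofReal (φ a ^ (q - 2)) ∂ν := by
  have h1 : ∫⁻ y, ‖f y‖ₑ ^ q ∂μ = ∫⁻ y, ENNReal.ofReal (‖f y‖ ^ q) ∂μ := by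
    refine lintegral_congr fun y => ?_
    rw [← ENNReal.ofReal_rpow_of_nonneg (norm_nonneg _) (by linarith), ofReal_norm]
  rw [h1, lintegral_rpow_eq_lintegral_meas_lt_mul μ (Eventually.of_forall fun y => norm_nonneg _) hf.norm.aemeasurable (by linarith),
    lintegral_rpow_eq_lintegral_meas_le_mul ν (Eventually.of_forall hφ0) hφ.aemeasurable (by linarith)]
  have h2 : ∫⁻ t in Set.Ioi (0:ℝ), μ {a | t < ‖f a‖} * ENNReal.ofReal (t ^ (q - 1)) ≤
      ∫⁻ t in Set.Ioi (0:ℝ), (4 * D) * (ν {a | t ≤ φ a} * ENNReal.ofReal (t ^ (q - 2 - 1))) := by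
    refine setLIntegral_mono' measurableSet_Ioi fun t ht => ?_
    have ht : 0 < t := ht
    obtain ⟨u, v, hv, hfuv, hu, hv2⟩ := H t ht
    have hsub : {a | t < ‖f a‖} ⊆ {a | ENNReal.ofReal ((t/2)^2) ≤ ‖v a‖ₑ ^ 2} := by
      intro a ha
      have ha : t < ‖f a‖ := ha
      have : t / 2 ≤ ‖v a‖ := by
        have := norm_add_le (u a) (v a)
        rw [← hfuv] at this
        linarith [hu a]
      show ENNReal.ofReal ((t/2)^2) ≤ ‖v a‖ₑ ^ 2
      rw [← ofReal_norm, ← ENNReal.ofReal_pow (norm_nonneg _)]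
      gcongr
    have hc := (mul_meas_ge_le_lintegral₀ (μ := μ) (f := fun a => ‖v a‖ₑ ^ 2) (by fun_prop) (ENNReal.ofReal ((t/2)^2))).trans hv2
    have hpow : t ^ (q - 1) = (t/2)^2 * (4 * t ^ (q - 2 - 1)) := by
      rw [show q - 1 = 2 + (q - 2 - 1) by ring, Real.rpow_add ht, Real.rpow_two]; ring
    calc μ {a | t < ‖f a‖} * ENNReal.ofReal (t ^ (q - 1)) ≤ μ {a | ENNReal.ofReal ((t/2)^2) ≤ ‖v a‖ₑ ^ 2} * ENNReal.ofReal (t ^ (q - 1)) := by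
          gcongr
      _ = (ENNReal.ofReal ((t/2)^2) * μ {a | ENNReal.ofReal ((t/2)^2) ≤ ‖v a‖ₑ ^ 2}) * (4 * ENNReal.ofReal (t ^ (q - 2 - 1))) := by
          rw [hpow, ENNReal.ofReal_mul (by positivity), ENNReal.ofReal_mul (by norm_num), ENNReal.ofReal_ofNat]
          ring
      _ ≤ (D * ν {a | t ≤ φ a}) * (4 * ENNReal.ofReal (t ^ (q - 2 - 1))) := by gcongr
      _ = _ := by ring
  refine (mul_le_mul' le_rfl h2).trans_eq ?_
  rw [lintegral_const_mul' _ _ (ENNReal.mul_ne_top (by simp) hD)]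
  have : ENNReal.ofReal (4 * q / (q - 2)) * D * (ENNReal.ofReal (q-2) * ∫⁻ t in Set.Ioi (0:ℝ), ν {a | t ≤ φ a} * ENNReal.ofReal (t ^ (q - 2 - 1)))
    = (ENNReal.ofReal (4 * q / (q - 2)) * ENNReal.ofReal (q-2)) * D * ∫⁻ t in Set.Ioi (0:ℝ), ν {a | t ≤ φ a} * ENNReal.ofReal (t ^ (q - 2 - 1)) := by ring
  rw [this, ← ENNReal.ofReal_mul (by apply div_nonneg <;> linarith), div_mul_cancel₀ _ (by linarith),
    ENNReal.ofReal_mul (by norm_num)]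
  rw [ENNReal.ofReal_ofNat]; ring

theorem kp_interp_op {V : Type*} [NormedAddCommGroup V] [InnerProductSpace ℝ V] [MeasurableSpace V] [BorelSpace V]
    [FiniteDimensional ℝ V] (q : ℝ) (hq : 2 < q) (T : (V → ℂ) → V → ℂ) (A D : ℝ≥0∞) (hD : D ≠ ∞)
    (hTm : ∀ g, StronglyMeasurable g → Integrable g → Measurable (T g))
    (hTadd : ∀ g₁ g₂, StronglyMeasurable g₁ → Integrable g₁ → StronglyMeasurable g₂ → Integrable g₂ →
      ∀ y, T (g₁ + g₂) y = T g₁ y + T g₂ y)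
    (hT1 : ∀ g, StronglyMeasurable g → Integrable g → ∀ y, ‖T g y‖ₑ ≤ A * ∫⁻ x, ‖g x‖ₑ)
    (hT2 : ∀ g, StronglyMeasurable g → Integrable g → ∫⁻ y, ‖T g y‖ₑ ^ 2 ≤ D * ∫⁻ x, ‖g x‖ₑ ^ 2)
    (h : V → ℂ) (hm : StronglyMeasurable h) (hi : Integrable h)
    (φ : V → ℝ) (hφ0 : ∀ a, 0 ≤ φ a) (hφ : Measurable φ)
    (H : ∀ t : ℝ, 0 < t → A * ∫⁻ x in {x | φ x < t}, ‖h x‖ₑ ≤ ENNReal.ofReal (t / 2)) :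
    ∫⁻ y, ‖T h y‖ₑ ^ q ≤ ENNReal.ofReal (4 * q / (q - 2)) * D * ∫⁻ x, ‖h x‖ₑ ^ 2 * ENNReal.ofReal (φ x ^ (q - 2)) := by
  have hem : Measurable (fun x => ‖h x‖ₑ ^ 2) := by have := hm.measurable; fun_prop
  have := kp_interp (volume.withDensity (fun x => ‖h x‖ₑ ^ 2)) volume q hq φ hφ0 hφ (T h) (hTm h hm hi) D hD ?_
  · rwa [lintegral_withDensity_eq_lintegral_mul _ hem (by fun_prop)] at this
  intro t ht
  have hS : MeasurableSet {x | φ x < t} := measurableSet_lt hφ measurable_const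
  have m1 := hm.indicator hS
  have m2 := hm.indicator hS.compl
  have i1 := hi.indicator hS
  have i2 := hi.indicator hS.compl
  refine ⟨T ({x | φ x < t}.indicator h), T ({x | φ x < t}ᶜ.indicator h), hTm _ m2 i2, ?_, ?_, ?_⟩
  · intro y
    rw [← hTadd _ _ m1 i1 m2 i2, Set.indicator_self_add_compl]
  · intro y
    have := hT1 _ m1 i1 y
    simp_rw [enorm_indicator_eq_indicator_enorm] at this
    rw [lintegral_indicator hS] at this
    have := this.trans (H t ht)
    rwa [← ofReal_norm, ENNReal.ofReal_le_ofReal_iff (by positivity)] at this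
  · refine (hT2 _ m2 i2).trans_eq ?_
    have hS' : {a | t ≤ φ a} = {x | φ x < t}ᶜ := by ext; simp
    rw [hS', withDensity_apply _ hS.compl, ← lintegral_indicator hS.compl]
    congr 2; ext x
    by_cases hx : x ∈ {x | φ x < t}ᶜ
    · rw [Set.indicator_of_mem hx, Set.indicator_of_mem hx]
    · rw [Set.indicator_of_notMem hx, Set.indicator_of_notMem hx]; simp

theorem kp_HY {V : Type*} [NormedAddCommGroup V] [InnerProductSpace ℝ V] [MeasurableSpace V] [BorelSpace V]
    [FiniteDimensional ℝ V] (q : ℝ) (hq : 2 < q) (T : (V → ℂ) → V → ℂ) (A : ℝ) (hA : 0 < A) (D : ℝ≥0∞) (hD : D ≠ ∞)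
    (hD0 : D ≠ 0)
    (hTm : ∀ g, StronglyMeasurable g → Integrable g → Measurable (T g))
    (hTadd : ∀ g₁ g₂, StronglyMeasurable g₁ → Integrable g₁ → StronglyMeasurable g₂ → Integrable g₂ →
      ∀ y, T (g₁ + g₂) y = T g₁ y + T g₂ y)
    (hT1 : ∀ g, StronglyMeasurable g → Integrable g → ∀ y, ‖T g y‖ₑ ≤ ENNReal.ofReal A * ∫⁻ x, ‖g x‖ₑ)
    (hT2 : ∀ g, StronglyMeasurable g → Integrable g → ∫⁻ y, ‖T g y‖ₑ ^ 2 ≤ D * ∫⁻ x, ‖g x‖ₑ ^ 2)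
    (h : V → ℂ) (hm : StronglyMeasurable h) (hi : Integrable h) :
    ∫⁻ y, ‖T h y‖ₑ ^ q ≤ ENNReal.ofReal (4 * q / (q - 2)) * D * ENNReal.ofReal ((2 * A) ^ (q - 2)) *
      (∫⁻ x, ‖h x‖ₑ ^ (q / (q - 1))) ^ (q - 1) := by
  set r := q / (q - 1) with hr
  have hq1 : 0 < q - 1 := by linarith
  have hr1 : r - 1 = 1 / (q - 1) := by rw [hr]; field_simp; ring
  have hr10 : 0 < r - 1 := by rw [hr1]; positivity
  set M := ∫⁻ x, ‖h x‖ₑ ^ r with hM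
  by_cases hMt : M = ∞
  · rw [hMt, ENNReal.top_rpow_of_pos hq1, ENNReal.mul_top]
    · exact le_top
    · refine mul_ne_zero (mul_ne_zero ?_ hD0) ?_
      · have : 0 < 4 * q / (q - 2) := div_pos (by linarith) (by linarith)
        simpa using this
      · have : 0 < (2 * A) ^ (q - 2) := by positivity
        simpa using this
  have hem : Measurable (fun x => ‖h x‖ₑ) := hm.measurable.enorm
  set m := M.toReal with hmdef
  have hMm : M = ENNReal.ofReal m := (ENNReal.ofReal_toReal hMt).symm
  have hm0 : 0 ≤ m := ENNReal.toReal_nonneg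
  have hmeas := hm.measurable
  have key := kp_interp_op q hq T (ENNReal.ofReal A) D hD hTm hTadd hT1 hT2 h hm hi
    (fun x => 2 * A * m * ‖h x‖ ^ (-(r - 1))) (fun x => by positivity) (by fun_prop) ?_
  · refine key.trans ?_
    rw [mul_assoc _ _ (M ^ (q - 1))]
    gcongr
    have : ∀ x, ‖h x‖ₑ ^ 2 * ENNReal.ofReal ((2 * A * m * ‖h x‖ ^ (-(r - 1))) ^ (q - 2)) ≤
        ENNReal.ofReal ((2 * A * m) ^ (q - 2)) * ‖h x‖ₑ ^ r := by
      intro x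
      by_cases hx : ‖h x‖ = 0
      · rw [← ofReal_norm, hx]; simp
      have hx : 0 < ‖h x‖ := lt_of_le_of_ne (norm_nonneg _) (Ne.symm hx)
      rw [← ofReal_norm, ← ENNReal.ofReal_pow (norm_nonneg _), ENNReal.ofReal_rpow_of_pos hx, ← ENNReal.ofReal_mul (by positivity),
        ← ENNReal.ofReal_mul (by positivity), Real.mul_rpow (by positivity) (by positivity), ← Real.rpow_mul hx.le,
        mul_left_comm, ← Real.rpow_two, ← Real.rpow_add hx]
      have : 2 + -(r - 1) * (q - 2) = r := by rw [hr1, hr]; field_simp; ring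
      rw [this]
    refine (lintegral_mono this).trans ?_
    rw [lintegral_const_mul _ (by fun_prop), ← hM, Real.mul_rpow (by positivity) hm0, ENNReal.ofReal_mul (by positivity), mul_assoc]
    gcongr
    rw [hMm, ← ENNReal.ofReal_mul (by positivity), ENNReal.ofReal_rpow_of_nonneg hm0 (by linarith)]
    rcases hm0.eq_or_lt with h0 | h0
    · rw [← h0]; simp
    · rw [show q - 1 = (q - 2) + 1 by ring, Real.rpow_add h0, Real.rpow_one]
  · intro t ht
    rcases hm0.eq_or_lt with h0 | h0
    · have hM0 : M = 0 := by rw [hMm, ← h0]; simp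
      rw [hM, lintegral_eq_zero_iff (by fun_prop)] at hM0
      have : ∫⁻ x in {x | 2 * A * m * ‖h x‖ ^ (-(r - 1)) < t}, ‖h x‖ₑ = 0 := by
        refine le_antisymm ((setLIntegral_le_lintegral _ _).trans ?_) zero_le
        rw [le_zero_iff, lintegral_eq_zero_iff hem]
        filter_upwards [hM0] with x hx
        simpa [show 0 < r by linarith, (show 0 < r by linarith).le, (show 0 < r by linarith).not_gt] using hx
      rw [this]; simp
    · have hpt : ∀ x ∈ {x | 2 * A * m * ‖h x‖ ^ (-(r - 1)) < t}, ‖h x‖ₑ ≤ ENNReal.ofReal (t / (2 * A * m)) * ‖h x‖ₑ ^ r := by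
        intro x hx
        by_cases hx0 : ‖h x‖ = 0
        · rw [← ofReal_norm, hx0]; simp
        have hx0 : 0 < ‖h x‖ := lt_of_le_of_ne (norm_nonneg _) (Ne.symm hx0)
        have hx : 2 * A * m * ‖h x‖ ^ (-(r - 1)) < t := hx
        rw [← ofReal_norm, ENNReal.ofReal_rpow_of_pos hx0, ← ENNReal.ofReal_mul (by positivity)]
        apply ENNReal.ofReal_le_ofReal
        rw [div_mul_eq_mul_div, le_div_iff₀ (by positivity)]
        have e : ‖h x‖ ^ r * ‖h x‖ ^ (-(r - 1)) = ‖h x‖ := by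
          rw [← Real.rpow_add hx0]; simp
        have hp : 0 < ‖h x‖ ^ r := by positivity
        calc ‖h x‖ * (2 * A * m) = (‖h x‖ ^ r * ‖h x‖ ^ (-(r - 1))) * (2 * A * m) := by rw [e]
          _ = (2 * A * m * ‖h x‖ ^ (-(r - 1))) * ‖h x‖ ^ r := by ring
          _ ≤ t * ‖h x‖ ^ r := by gcongr
      calc ENNReal.ofReal A * ∫⁻ x in {x | 2 * A * m * ‖h x‖ ^ (-(r - 1)) < t}, ‖h x‖ₑ
          ≤ ENNReal.ofReal A * ∫⁻ x in {x | 2 * A * m * ‖h x‖ ^ (-(r - 1)) < t}, ENNReal.ofReal (t / (2 * A * m)) * ‖h x‖ₑ ^ r := by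
            exact mul_le_mul' le_rfl (setLIntegral_mono (by fun_prop) hpt)
        _ ≤ ENNReal.ofReal A * ∫⁻ x, ENNReal.ofReal (t / (2 * A * m)) * ‖h x‖ₑ ^ r := by
            exact mul_le_mul' le_rfl (setLIntegral_le_lintegral _ _)
        _ = ENNReal.ofReal (t / 2) := by
            rw [lintegral_const_mul _ (by fun_prop), ← hM, hMm, ← ENNReal.ofReal_mul (by positivity), ← ENNReal.ofReal_mul (by positivity)]
            congr 1; field_simp


section
variable {V : Type*} [NormedAddCommGroup V] [InnerProductSpace ℝ V] [MeasurableSpace V] [BorelSpace V]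
    [FiniteDimensional ℝ V]

theorem kpFT_integrable (g : V → ℂ) (hi : Integrable g) (y : V) :
    Integrable (fun η => Complex.exp (Complex.I * ((inner ℝ y η : ℝ) : ℂ)) * g η) := by
  refine hi.bdd_mul (c := 1) (Continuous.aestronglyMeasurable (by fun_prop)) (Eventually.of_forall fun η => ?_)
  rw [kp_norm_expI]

theorem kpFT_measurable (g : V → ℂ) (hm : StronglyMeasurable g) : StronglyMeasurable (kpFT g) := by
  unfold kpFT
  refine StronglyMeasurable.integral_prod_right' (f := fun z : V × V => Complex.exp (Complex.I * ((inner ℝ z.1 z.2 : ℝ) : ℂ)) * g z.2) ?_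
  exact StronglyMeasurable.mul (Continuous.stronglyMeasurable (by fun_prop)) (hm.comp_measurable measurable_snd)

theorem kpFT_add (g₁ g₂ : V → ℂ) (h₁ : Integrable g₁) (h₂ : Integrable g₂) (y : V) :
    kpFT (g₁ + g₂) y = kpFT g₁ y + kpFT g₂ y := by
  unfold kpFT
  rw [← integral_add (kpFT_integrable g₁ h₁ y) (kpFT_integrable g₂ h₂ y)]
  congr 1; ext η; simp [mul_add]

theorem kpFT_le (g : V → ℂ) (y : V) : ‖kpFT g y‖ₑ ≤ ∫⁻ x, ‖g x‖ₑ := by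
  refine (enorm_integral_le_lintegral_enorm _).trans_eq ?_
  refine lintegral_congr fun x => ?_
  rw [enorm_mul, ← ofReal_norm, kp_norm_expI]; simp

end

theorem kp_int_pow (l : ℝ) (h0 : 0 < l) (h1 : l < 1) (R : ℝ) (hR : 0 ≤ R) :
    ∫⁻ x in {x : ℝ | |x| < R}, ENNReal.ofReal (|x| ^ (-l)) ≤ ENNReal.ofReal (2 / (1 - l) * R ^ (1 - l)) := by
  have hI : ∫⁻ x in Set.Ioc (0:ℝ) R, ENNReal.ofReal (|x| ^ (-l)) = ENNReal.ofReal (1 / (1 - l) * R ^ (1 - l)) := by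
    have hint : IntegrableOn (fun x : ℝ => x ^ (-l)) (Set.Ioc 0 R) := by
      rw [← intervalIntegrable_iff_integrableOn_Ioc_of_le hR]
      exact intervalIntegral.intervalIntegrable_rpow' (by linarith)
    have e : ∫⁻ x in Set.Ioc (0:ℝ) R, ENNReal.ofReal (|x| ^ (-l)) = ∫⁻ x in Set.Ioc (0:ℝ) R, ENNReal.ofReal (x ^ (-l)) := by
      refine setLIntegral_congr_fun measurableSet_Ioc fun x hx => ?_
      simp only [abs_of_pos hx.1]
    rw [e, ← ofReal_integral_eq_lintegral_ofReal hint, ← intervalIntegral.integral_of_le hR, integral_rpow (Or.inl (by linarith))]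
    · congr 1
      rw [Real.zero_rpow (by linarith), show -l + 1 = 1 - l by ring]; ring
    · filter_upwards [self_mem_ae_restrict measurableSet_Ioc] with x hx
      exact Real.rpow_nonneg hx.1.le _
  have hI2 : ∫⁻ x in Set.Ico (-R) (0:ℝ), ENNReal.ofReal (|x| ^ (-l)) = ENNReal.ofReal (1 / (1 - l) * R ^ (1 - l)) := by
    rw [← hI]
    have := (Measure.measurePreserving_neg (volume : Measure ℝ)).setLIntegral_comp_preimage (s := Set.Ioc (0:ℝ) R) measurableSet_Ioc
      (f := fun x => ENNReal.ofReal (|x| ^ (-l))) (by fun_prop)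
    rw [← this]
    simp
  have hz : ∫⁻ x in ({0} : Set ℝ), ENNReal.ofReal (|x| ^ (-l)) = 0 := by simp
  have hsub : {x : ℝ | |x| < R} ⊆ (Set.Ioc (0:ℝ) R ∪ Set.Ico (-R) 0) ∪ {0} := by
    intro x hx
    have hx := abs_lt.1 (show |x| < R from hx)
    rcases lt_trichotomy x 0 with h | h | h
    · left; right; exact ⟨hx.1.le, h⟩
    · right; exact h
    · left; left; exact ⟨h, hx.2.le⟩
  calc _ ≤ ∫⁻ x in (Set.Ioc (0:ℝ) R ∪ Set.Ico (-R) 0) ∪ {0}, ENNReal.ofReal (|x| ^ (-l)) := lintegral_mono_set hsub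
    _ ≤ _ := (lintegral_union_le _ _ _).trans (add_le_add_left (lintegral_union_le _ _ _) _)
    _ = _ := by
      rw [hz, hI, hI2, add_zero, ← ENNReal.ofReal_add]
      · congr 1; ring
      all_goals exact mul_nonneg (by simp; linarith) (by positivity)

theorem kp_sobolev (p q : ℝ) (hq : 2 < q) (hp : 2 < p) (hpq : 1 / p + 1 / q = 1 / 2) :
    ∃ C : ℝ, 0 < C ∧ ∀ h : ℝ → ℂ, StronglyMeasurable h → Integrable h →
      ∫⁻ x, ‖kpFT h x‖ₑ ^ q ≤ ENNReal.ofReal C * (∫⁻ ξ, ‖h ξ‖ₑ ^ 2 * ENNReal.ofReal (|ξ| ^ (2 / p))) ^ (q / 2) := by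
  have hq2 : 0 < q - 2 := by linarith
  have hpq2 : 2 / p = 1 - 2 / q := by
    have : 2 / p = 2 * (1 / p) := by ring
    rw [this, show 1 / p = 1/2 - 1/q by linarith]; ring
  set D : ℝ := 2 * (2 * Real.pi) ^ (Module.finrank ℝ ℝ)
  have hD : 0 < D := by positivity
  set c : ℝ := 2 * q ^ (1/2 : ℝ)
  have hc : 0 < c := by positivity
  refine ⟨4 * q / (q - 2) * D * c ^ (q - 2), by positivity, fun h hm hi => ?_⟩
  set M := ∫⁻ ξ, ‖h ξ‖ₑ ^ 2 * ENNReal.ofReal (|ξ| ^ (2 / p)) with hM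
  by_cases hMt : M = ∞
  · rw [hMt, ENNReal.top_rpow_of_pos (by positivity), ENNReal.mul_top]
    · exact le_top
    · have : 0 < 4 * q / (q - 2) * D * c ^ (q - 2) := by positivity
      simpa using this
  set m := M.toReal with hmdef
  have hMm : M = ENNReal.ofReal m := (ENNReal.ofReal_toReal hMt).symm
  have hm0 : 0 ≤ m := ENNReal.toReal_nonneg
  have hmeas := hm.measurable
  have key := kp_interp_op q hq kpFT 1 (ENNReal.ofReal D) (by simp) (fun g hg _ => (kpFT_measurable g hg).measurable)
    (fun g₁ g₂ _ i₁ _ i₂ y => kpFT_add g₁ g₂ i₁ i₂ y) (fun g _ _ y => by simpa using kpFT_le g y)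
    (fun g hg ig => kp_plancherel g hg ig) h hm hi
    (fun x => c * m ^ (1/2 : ℝ) * |x| ^ (1 / q)) (fun x => by positivity) (by fun_prop) ?_
  · refine key.trans ?_
    have : ∀ x, ‖h x‖ₑ ^ 2 * ENNReal.ofReal ((c * m ^ (1/2 : ℝ) * |x| ^ (1 / q)) ^ (q - 2)) =
        ENNReal.ofReal ((c * m ^ (1/2 : ℝ)) ^ (q - 2)) * (‖h x‖ₑ ^ 2 * ENNReal.ofReal (|x| ^ (2 / p))) := by
      intro x
      rw [Real.mul_rpow (by positivity) (by positivity), ENNReal.ofReal_mul (by positivity), ← Real.rpow_mul (abs_nonneg x)]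
      have : 1 / q * (q - 2) = 2 / p := by rw [hpq2]; field_simp
      rw [this]; ring
    simp_rw [this]
    rw [lintegral_const_mul _ (by fun_prop), ← hM, hMm, ← ENNReal.ofReal_mul (by positivity), ← ENNReal.ofReal_mul (by positivity),
      ← ENNReal.ofReal_mul (by positivity), ENNReal.ofReal_rpow_of_nonneg hm0 (by positivity), ← ENNReal.ofReal_mul (by positivity)]
    apply ENNReal.ofReal_le_ofReal
    rcases hm0.eq_or_lt with h0 | h0
    · rw [← h0]; simp [Real.zero_rpow (show q/2 ≠ 0 by positivity)]
    · rw [Real.mul_rpow (by positivity) (by positivity), ← Real.rpow_mul h0.le]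
      have : m ^ (q/2) = m ^ (1/2 * (q - 2)) * m := by
        rw [← Real.rpow_add_one h0.ne']; congr 1; ring
      rw [this]; apply le_of_eq; ring
  · intro t ht
    rw [one_mul]
    set S := {x : ℝ | c * m ^ (1/2 : ℝ) * |x| ^ (1 / q) < t} with hS
    have hSm : MeasurableSet S := measurableSet_lt (by fun_prop) measurable_const
    have hol : ∫⁻ x in S, ‖h x‖ₑ ≤ M ^ (1/2 : ℝ) * (∫⁻ x in S, ENNReal.ofReal (|x| ^ (-(2/p)))) ^ (1/2 : ℝ) := by
      have e : ∫⁻ x in S, ‖h x‖ₑ = ∫⁻ x in S, ((fun x => ‖h x‖ₑ * ENNReal.ofReal (|x| ^ (1/p))) * (fun x => ENNReal.ofReal (|x| ^ (-(1/p))))) x := by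
        have h0 : ∀ᵐ x : ℝ, x ≠ 0 := by simp [ae_iff]
        refine lintegral_congr_ae (ae_restrict_of_ae ?_)
        filter_upwards [h0] with x hx
        have : 0 < |x| := abs_pos.2 hx
        simp only [Pi.mul_apply]
        rw [mul_assoc, ← ENNReal.ofReal_mul (by positivity), ← Real.rpow_add this]; simp
      rw [e]
      refine (ENNReal.lintegral_mul_le_Lp_mul_Lq _ Real.HolderConjugate.two_two (by fun_prop) (by fun_prop)).trans ?_
      refine mul_le_mul' (ENNReal.rpow_le_rpow ?_ (by norm_num)) (ENNReal.rpow_le_rpow ?_ (by norm_num))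
      · refine (setLIntegral_le_lintegral _ _).trans_eq ?_
        rw [hM]; refine lintegral_congr fun x => ?_
        rw [ENNReal.mul_rpow_of_nonneg _ _ (by norm_num), ENNReal.ofReal_rpow_of_nonneg (by positivity) (by norm_num), ← Real.rpow_mul (abs_nonneg x), ENNReal.rpow_two]
        congr 3; ring
      · refine le_of_eq (lintegral_congr fun x => ?_)
        rw [ENNReal.ofReal_rpow_of_nonneg (by positivity) (by norm_num), ← Real.rpow_mul (abs_nonneg x)]
        congr 2; ring
    refine hol.trans ?_
    rcases hm0.eq_or_lt with h0 | h0
    · rw [hMm, ← h0]; simp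
    · set R : ℝ := (t / (c * m ^ (1/2:ℝ))) ^ q with hR
      have hsub : S ⊆ {x : ℝ | |x| < R} := by
        intro x hx
        have hx : c * m ^ (1/2 : ℝ) * |x| ^ (1 / q) < t := hx
        show |x| < R
        have h1 : |x| ^ (1/q) < t / (c * m ^ (1/2:ℝ)) := by
          rw [lt_div_iff₀ (by positivity)]; linarith
        have := Real.rpow_lt_rpow (by positivity) h1 (show 0 < q by linarith)
        rwa [← Real.rpow_mul (abs_nonneg x), one_div_mul_cancel (by linarith), Real.rpow_one] at this
      have h2 : ∫⁻ x in S, ENNReal.ofReal (|x| ^ (-(2/p))) ≤ ENNReal.ofReal (2 / (1 - 2/p) * R ^ (1 - 2/p)) :=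
        (lintegral_mono_set hsub).trans (kp_int_pow _ (by positivity) (by rw [div_lt_one] <;> linarith) R (by positivity))
      have h3 : 2 / (1 - 2/p) * R ^ (1 - 2/p) = q * (t / (c * m ^ (1/2:ℝ))) ^ 2 := by
        rw [hpq2, hR, ← Real.rpow_mul (by positivity), sub_sub_cancel]
        rw [mul_div_cancel₀ _ (by linarith : q ≠ 0), Real.rpow_two]; field_simp
      rw [h3] at h2
      refine (mul_le_mul' le_rfl (ENNReal.rpow_le_rpow h2 (by norm_num))).trans_eq ?_
      rw [hMm, ENNReal.ofReal_rpow_of_nonneg hm0 (by norm_num), ENNReal.ofReal_rpow_of_nonneg (by positivity) (by norm_num), ← ENNReal.ofReal_mul (by positivity)]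
      congr 1
      rw [Real.mul_rpow (by positivity) (by positivity), ← Real.rpow_two, ← Real.rpow_mul (by positivity)]
      norm_num
      simp only [c]
      field_simp



theorem kp_gauss_int (z : ℂ) (hz : 0 < z.re) :
    Integrable (fun η : E2 => Complex.exp (-z * ‖η‖ ^ 2)) := by
  have := GaussianFourier.integrable_cexp_neg_mul_sq_norm_add (V := E2) (b := z) hz 0 0
  simpa using this

def kpT (z : ℂ) (g : E2 → ℂ) : E2 → ℂ := kpFT (fun η => Complex.exp (-z * ‖η‖ ^ 2) * kpFT g η)

theorem kpFT_norm_le {V : Type*} [NormedAddCommGroup V] [InnerProductSpace ℝ V] [MeasurableSpace V] [BorelSpace V]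
    [FiniteDimensional ℝ V] (g : V → ℂ) (y : V) : ‖kpFT g y‖ ≤ ∫ x, ‖g x‖ := by
  refine (norm_integral_le_integral_norm _).trans_eq ?_
  congr 1; ext x
  rw [norm_mul, kp_norm_expI, one_mul]

theorem kpT_aux (z : ℂ) (hz : 0 < z.re) (g : E2 → ℂ) (hm : StronglyMeasurable g) :
    StronglyMeasurable (fun η : E2 => Complex.exp (-z * ‖η‖ ^ 2) * kpFT g η) ∧
    Integrable (fun η : E2 => Complex.exp (-z * ‖η‖ ^ 2) * kpFT g η) := by
  refine ⟨StronglyMeasurable.mul (Continuous.stronglyMeasurable (by fun_prop)) (kpFT_measurable g hm), ?_⟩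
  exact (kp_gauss_int z hz).mul_bdd (c := ∫ x, ‖g x‖) (kpFT_measurable g hm).aestronglyMeasurable
    (Eventually.of_forall fun η => kpFT_norm_le g η)

open Complex in
theorem kp_gauss_bound (z : ℂ) (hz : 0 < z.re) (hz' : z.im ≠ 0) (w : E2) :
    ‖∫ η : E2, cexp (-z * ‖η‖ ^ 2 + I * ((inner ℝ w η : ℝ) : ℂ))‖ ≤ Real.pi / |z.im| := by
  rw [GaussianFourier.integral_cexp_neg_mul_sq_norm_add hz, norm_mul]
  have h1 : ((Module.finrank ℝ E2 : ℂ) / 2) = 1 := by simp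
  rw [h1, cpow_one, norm_div, Complex.norm_of_nonneg Real.pi_pos.le, Complex.norm_exp]
  have h2 : Real.exp ((I ^ 2 * (‖w‖:ℂ) ^ 2 / (4 * z)).re) ≤ 1 := by
    rw [Real.exp_le_one_iff]
    have : I ^ 2 * (‖w‖:ℂ) ^ 2 / (4 * z) = ((-‖w‖^2/4 : ℝ) : ℂ) * z⁻¹ := by
      rw [I_sq]; push_cast
      have : z ≠ 0 := fun h => by simp [h] at hz
      field_simp
    rw [this, re_ofReal_mul, inv_re]
    have : 0 ≤ z.re / normSq z := div_nonneg hz.le (normSq_nonneg z)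
    nlinarith [sq_nonneg ‖w‖]
  have h3 : Real.pi / ‖z‖ ≤ Real.pi / |z.im| := by
    have := abs_im_le_norm z
    have := abs_pos.2 hz'
    gcongr
  calc _ ≤ Real.pi / ‖z‖ * 1 := by gcongr
    _ ≤ _ := by rw [mul_one]; exact h3

open Complex in
theorem kpT_le (z : ℂ) (hz : 0 < z.re) (hz' : z.im ≠ 0) (g : E2 → ℂ) (hm : StronglyMeasurable g) (hi : Integrable g) (y : E2) :
    ‖kpT z g y‖ₑ ≤ ENNReal.ofReal (Real.pi / |z.im|) * ∫⁻ x, ‖g x‖ₑ := by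
  have e1 : kpT z g y = ∫ x, g x * ∫ η : E2, cexp (-z * ‖η‖ ^ 2 + I * ((inner ℝ (x + y) η : ℝ) : ℂ)) := by
    unfold kpT
    rw [kpFT]
    have : ∀ η : E2, cexp (I * ((inner ℝ y η : ℝ):ℂ)) * (cexp (-z * ‖η‖ ^ 2) * kpFT g η) =
      ∫ x, cexp (I * ((inner ℝ y η : ℝ):ℂ)) * (cexp (-z * ‖η‖ ^ 2) * (cexp (I * ((inner ℝ η x : ℝ):ℂ)) * g x)) := by
      intro η
      rw [integral_const_mul, integral_const_mul]; rfl
    simp_rw [this]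
    rw [integral_integral_swap]
    · congr 1; ext x
      rw [← integral_const_mul]
      congr 1; ext η
      rw [inner_add_left, real_inner_comm x η, ofReal_add, mul_add, Complex.exp_add, Complex.exp_add]
      ring
    · have hI : Integrable (fun p : E2 × E2 => cexp (-z * ‖p.1‖ ^ 2) * g p.2) (volume.prod volume) :=
        (kp_gauss_int z hz).mul_prod hi
      refine hI.norm.mono' ?_ (Eventually.of_forall fun p => ?_)
      · refine StronglyMeasurable.aestronglyMeasurable ?_
        refine StronglyMeasurable.mul (Continuous.stronglyMeasurable (by fun_prop))
          (StronglyMeasurable.mul (Continuous.stronglyMeasurable (by fun_prop)) (StronglyMeasurable.mul (Continuous.stronglyMeasurable (by fun_prop)) (hm.comp_measurable measurable_snd)))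
      · simp only [Function.uncurry]
        rw [norm_mul, norm_mul, norm_mul, kp_norm_expI, kp_norm_expI, one_mul, one_mul, norm_mul]
  rw [e1]
  refine (enorm_integral_le_lintegral_enorm _).trans ?_
  rw [← lintegral_const_mul _ hm.measurable.enorm]
  refine lintegral_mono fun x => ?_
  rw [enorm_mul, mul_comm]
  gcongr
  rw [← ofReal_norm]
  exact ENNReal.ofReal_le_ofReal (kp_gauss_bound z hz hz' _)

theorem kpT_Lq (q : ℝ) (hq : 2 < q) : ∃ C : ℝ, 0 < C ∧ ∀ z : ℂ, 0 < z.re → z.im ≠ 0 → ∀ g : E2 → ℂ,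
    StronglyMeasurable g → Integrable g →
    ∫⁻ y, ‖kpT z g y‖ₑ ^ q ≤ ENNReal.ofReal (C * |z.im| ^ (-(q - 2))) * (∫⁻ x, ‖g x‖ₑ ^ (q / (q - 1))) ^ (q - 1) := by
  set d : ℝ := 2 * (2 * Real.pi) ^ (Module.finrank ℝ E2)
  have hd : 0 < d := by positivity
  have hq2 : 0 < q - 2 := by linarith
  refine ⟨4 * q / (q - 2) * (d * d) * (2 * Real.pi) ^ (q - 2), by positivity, fun z hz hz' g hm hi => ?_⟩
  have hzp := abs_pos.2 hz'
  have := kp_HY q hq (kpT z) (Real.pi / |z.im|) (by positivity) (ENNReal.ofReal (d * d)) (by simp)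
    (by simpa using mul_pos hd hd)
    (fun g hm _ => (kpFT_measurable _ (kpT_aux z hz g hm).1).measurable) ?_ (fun g hm hi y => kpT_le z hz hz' g hm hi y) ?_ g hm hi
  · refine this.trans_eq ?_
    rw [← ENNReal.ofReal_mul (by positivity), ← ENNReal.ofReal_mul (by positivity)]
    congr 2
    rw [← mul_div_assoc, Real.div_rpow (by positivity) (by positivity), Real.rpow_neg (by positivity)]
    ring
  · intro g₁ g₂ m₁ i₁ m₂ i₂ y
    unfold kpT
    rw [← kpFT_add _ _ (kpT_aux z hz g₁ m₁).2 (kpT_aux z hz g₂ m₂).2]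
    congr 1; ext η
    simp only [Pi.add_apply]
    rw [kpFT_add g₁ g₂ i₁ i₂, mul_add]
  · intro g m i
    refine (kp_plancherel _ (kpT_aux z hz g m).1 (kpT_aux z hz g m).2).trans ?_
    rw [ENNReal.ofReal_mul hd.le, mul_assoc]
    gcongr
    refine le_trans (lintegral_mono fun η => ?_) (kp_plancherel g m i)
    gcongr
    rw [enorm_mul]
    have : ‖Complex.exp (-z * ‖η‖ ^ 2)‖ₑ ≤ 1 := by
      rw [← ofReal_norm, Complex.norm_exp, ENNReal.ofReal_le_one, Real.exp_le_one_iff, ← Complex.ofReal_pow, Complex.re_mul_ofReal]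
      rw [Complex.neg_re]
      nlinarith [sq_nonneg ‖η‖]
    calc _ ≤ 1 * ‖kpFT g η‖ₑ := by gcongr
      _ = _ := one_mul _

open Complex in
theorem kp_J (q : ℝ) (hq : 2 < q) : ∃ C : ℝ, 0 < C ∧ ∀ (ε t s : ℝ), 0 < ε → t ≠ s → ∀ f g : E2 → ℂ,
    StronglyMeasurable f → Integrable f → StronglyMeasurable g → Integrable g →
    ‖∫ η : E2, cexp (-(ε : ℂ) * ‖η‖ ^ 2) * ((cexp (I * ((-t * ‖η‖ ^ 2 : ℝ) : ℂ)) * kpFT f η) *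
      (starRingEnd ℂ) (cexp (I * ((-s * ‖η‖ ^ 2 : ℝ) : ℂ)) * kpFT g η))‖ₑ ≤
    ENNReal.ofReal C * ENNReal.ofReal (|t - s| ^ (-((q - 2) / q))) * ((∫⁻ x, ‖f x‖ₑ ^ (q / (q - 1))) ^ ((q - 1) / q) *
      (∫⁻ x, ‖g x‖ₑ ^ (q / (q - 1))) ^ ((q - 1) / q)) := by
  obtain ⟨C, hC, hT⟩ := kpT_Lq q hq
  refine ⟨C ^ (1 / q), by positivity, fun ε t s hε hts f g mf jf mg jg => ?_⟩
  set z : ℂ := (ε : ℂ) + I * ((t - s : ℝ) : ℂ) with hz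
  have hzre : z.re = ε := by simp [hz]
  have hzim : z.im = t - s := by simp [hz]
  have e1 : ∫ η : E2, cexp (-(ε : ℂ) * ‖η‖ ^ 2) * ((cexp (I * ((-t * ‖η‖ ^ 2 : ℝ) : ℂ)) * kpFT f η) *
      (starRingEnd ℂ) (cexp (I * ((-s * ‖η‖ ^ 2 : ℝ) : ℂ)) * kpFT g η)) = ∫ y, (starRingEnd ℂ) (g y) * kpT z f (-y) := by
    have e2 : ∀ η : E2, cexp (-(ε : ℂ) * ‖η‖ ^ 2) * ((cexp (I * ((-t * ‖η‖ ^ 2 : ℝ) : ℂ)) * kpFT f η) *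
      (starRingEnd ℂ) (cexp (I * ((-s * ‖η‖ ^ 2 : ℝ) : ℂ)) * kpFT g η)) =
       ∫ y, (cexp (-z * ‖η‖ ^ 2) * kpFT f η) * (starRingEnd ℂ) (cexp (I * ((inner ℝ η y : ℝ) : ℂ)) * g y) := by
      intro η
      rw [integral_const_mul, integral_conj]
      change _ = _ * (starRingEnd ℂ) (kpFT g η)
      rw [map_mul, ← Complex.exp_conj, map_mul, conj_I, conj_ofReal]
      have : cexp (-z * ‖η‖ ^ 2) = cexp (-(ε : ℂ) * ‖η‖ ^ 2) * cexp (I * ((-t * ‖η‖ ^ 2 : ℝ) : ℂ)) * cexp (-I * ((-s * ‖η‖ ^ 2 : ℝ) : ℂ)) := by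
        rw [← Complex.exp_add, ← Complex.exp_add]; congr 1
        rw [hz]; push_cast; ring
      rw [this]; ring
    simp_rw [e2]
    rw [integral_integral_swap]
    · congr 1; ext y
      unfold kpT; rw [kpFT, ← integral_const_mul]
      congr 1; ext η
      rw [map_mul, ← Complex.exp_conj, map_mul, conj_I, conj_ofReal, inner_neg_left, real_inner_comm, ofReal_neg, mul_neg, neg_mul I]
      ring
    · have hI := (kpT_aux z (by rw [hzre]; exact hε) f mf).2.mul_prod jg
      refine hI.norm.mono' ?_ (Eventually.of_forall fun p => ?_)
      · refine StronglyMeasurable.aestronglyMeasurable ?_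
        refine StronglyMeasurable.mul ((kpT_aux z (by rw [hzre]; exact hε) f mf).1.comp_measurable measurable_fst)
          (Complex.continuous_conj.comp_stronglyMeasurable (StronglyMeasurable.mul (Continuous.stronglyMeasurable (by fun_prop)) (mg.comp_measurable measurable_snd)))
      · simp only [Function.uncurry]
        rw [norm_mul, RCLike.norm_conj, norm_mul _ (g p.2), kp_norm_expI, one_mul]
        exact (norm_mul _ _).ge
  rw [e1]
  have hTm : Measurable (kpT z f) := (kpFT_measurable _ (kpT_aux z (by rw [hzre]; exact hε) f mf).1).measurable
  have hgm := mg.measurable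
  have hconj : Real.HolderConjugate (q / (q - 1)) q := by
    have := Real.HolderConjugate.conjExponent (show 1 < q by linarith)
    exact this.symm
  have hq1 : 0 < q - 1 := by linarith
  have hts' : 0 < |t - s| := abs_pos.2 (sub_ne_zero.2 hts)
  calc ‖∫ y, (starRingEnd ℂ) (g y) * kpT z f (-y)‖ₑ ≤ ∫⁻ y, ((fun y => ‖g y‖ₑ) * fun y => ‖kpT z f (-y)‖ₑ) y := by
        refine (enorm_integral_le_lintegral_enorm _).trans_eq (lintegral_congr fun y => ?_)
        rw [enorm_mul, ← ofReal_norm, RCLike.norm_conj, ofReal_norm]; rfl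
    _ ≤ (∫⁻ y, ‖g y‖ₑ ^ (q / (q - 1))) ^ (1 / (q / (q - 1))) * (∫⁻ y, ‖kpT z f (-y)‖ₑ ^ q) ^ (1 / q) :=
        ENNReal.lintegral_mul_le_Lp_mul_Lq _ hconj (by fun_prop) (by fun_prop)
    _ = (∫⁻ y, ‖g y‖ₑ ^ (q / (q - 1))) ^ (1 / (q / (q - 1))) * (∫⁻ y, ‖kpT z f y‖ₑ ^ q) ^ (1 / q) := by
        rw [lintegral_neg_eq_self (fun y => ‖kpT z f y‖ₑ ^ q)]
    _ ≤ (∫⁻ y, ‖g y‖ₑ ^ (q / (q - 1))) ^ (1 / (q / (q - 1))) *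
         (ENNReal.ofReal (C * |z.im| ^ (-(q - 2))) * (∫⁻ x, ‖f x‖ₑ ^ (q / (q - 1))) ^ (q - 1)) ^ (1 / q) := by
        gcongr
        exact hT z (by rw [hzre]; exact hε) (by rw [hzim]; exact sub_ne_zero.2 hts) f mf jf
    _ = _ := by
        rw [hzim, ENNReal.mul_rpow_of_nonneg _ _ (by positivity), ENNReal.ofReal_rpow_of_nonneg (by positivity) (by positivity),
          Real.mul_rpow hC.le (by positivity), ← Real.rpow_mul hts'.le, ← ENNReal.rpow_mul, ENNReal.ofReal_mul (by positivity)]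
        rw [one_div_div, show -(q - 2) * (1 / q) = -((q - 2) / q) by ring, show (q - 1) * (1 / q) = (q - 1) / q by ring]
        ring


theorem kp_int_inv_sq (R : ℝ) (hR : 0 < R) :
    ∫⁻ x in {x : ℝ | R ≤ |x|}, ENNReal.ofReal (|x| ^ (-2 : ℝ)) ≤ ENNReal.ofReal (2 / R) := by
  have h1 : ∫⁻ x in Set.Ioi R, ENNReal.ofReal (|x| ^ (-2 : ℝ)) = ENNReal.ofReal (1 / R) := by
    have h := integral_Ioi_rpow_of_lt (a := -2) (by norm_num) hR
    have hi := integrableOn_Ioi_rpow_of_lt (a := -2) (by norm_num) hR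
    have h2 : (1 / R) = ∫ x in Set.Ioi R, x ^ (-2 : ℝ) := by
      rw [h]; norm_num [Real.rpow_neg_one]
    rw [h2, ofReal_integral_eq_lintegral_ofReal hi]
    · refine setLIntegral_congr_fun measurableSet_Ioi fun x hx => ?_
      rw [abs_of_pos (hR.trans hx)]
    · refine (ae_restrict_iff' measurableSet_Ioi).2 (Eventually.of_forall fun x hx => ?_)
      exact Real.rpow_nonneg (hR.trans hx).le _
  have h1' : ∫⁻ x in Set.Ici R, ENNReal.ofReal (|x| ^ (-2 : ℝ)) = ENNReal.ofReal (1 / R) := by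
    rw [← h1]; exact setLIntegral_congr Ioi_ae_eq_Ici.symm
  have h3 : ∫⁻ x in Set.Iic (-R), ENNReal.ofReal (|x| ^ (-2 : ℝ)) = ENNReal.ofReal (1 / R) := by
    rw [← h1', ← lintegral_indicator measurableSet_Iic, ← lintegral_indicator measurableSet_Ici,
      ← lintegral_neg_eq_self]
    congr 1; ext x
    simp only [Set.indicator, Set.mem_Iic, Set.mem_Ici, neg_le_neg_iff, abs_neg]
  have hs : {x : ℝ | R ≤ |x|} ⊆ Set.Ici R ∪ Set.Iic (-R) := by
    intro x hx
    rcases le_abs.1 (show R ≤ |x| from hx) with h | h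
    · exact Or.inl h
    · exact Or.inr (by simpa using (le_neg.1 h))
  refine (lintegral_mono_set hs).trans ((lintegral_union_le _ _ _).trans ?_)
  rw [h1', h3, ← ENNReal.ofReal_add (by positivity) (by positivity)]
  apply le_of_eq; congr 1; ring

theorem kp_hls_aux (p : ℝ) (hp : 2 < p) : ∃ C : ℝ, 0 < C ∧ ∀ (a : ℝ → ℝ≥0∞), Measurable a → ∀ (n α : ℝ), 0 < n → 0 < α →
    (∫⁻ s, a s ^ (p / (p - 1))) ≤ ENNReal.ofReal (n ^ (p / (p - 1))) → ∀ t,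
    ∫⁻ s in {s | a s ≤ ENNReal.ofReal α}, a s * ENNReal.ofReal (|t - s| ^ (-(2 / p))) ≤
      ENNReal.ofReal (C * (α ^ (p / (p - 1) - 1) * n ^ (2 - p / (p - 1)))) := by
  set l := 2 / p with hl
  have hl0 : 0 < l := by positivity
  have hl1 : l < 1 := by rw [hl, div_lt_one (by linarith)]; exact hp
  refine ⟨2 / (1 - l) + 2 ^ (1 / p), by have : 0 < 1 - l := by linarith
                                        positivity, fun a ha n α hn hα hI t => ?_⟩
  set p' := p / (p - 1) with hp'
  have hp1 : 0 < p - 1 := by linarith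
  have hp'0 : 0 < p' := by positivity
  set R := (n / α) ^ p' with hR
  have hR0 : 0 < R := by positivity
  have hconj : Real.HolderConjugate p' p := (Real.HolderConjugate.conjExponent (show 1 < p by linarith)).symm
  have hk : Measurable fun s : ℝ => ENNReal.ofReal (|t - s| ^ (-l)) := by fun_prop
  have near : ∫⁻ s in {s | a s ≤ ENNReal.ofReal α} ∩ {s | |t - s| < R}, a s * ENNReal.ofReal (|t - s| ^ (-l)) ≤
      ENNReal.ofReal (2 / (1 - l) * (α ^ (p' - 1) * n ^ (2 - p'))) := by
    have hms : MeasurableSet ({s | a s ≤ ENNReal.ofReal α} ∩ {s | |t - s| < R}) :=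
      (measurableSet_le ha measurable_const).inter (measurableSet_lt (by fun_prop) measurable_const)
    calc _ ≤ ∫⁻ s in {s | a s ≤ ENNReal.ofReal α} ∩ {s | |t - s| < R}, ENNReal.ofReal α * ENNReal.ofReal (|t - s| ^ (-l)) := by
          refine setLIntegral_mono' hms fun s hs => mul_le_mul' hs.1 le_rfl
      _ ≤ ∫⁻ s in {s | |t - s| < R}, ENNReal.ofReal α * ENNReal.ofReal (|t - s| ^ (-l)) := lintegral_mono_set Set.inter_subset_right
      _ = ENNReal.ofReal α * ∫⁻ s in {s | |t - s| < R}, ENNReal.ofReal (|t - s| ^ (-l)) := lintegral_const_mul _ hk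
      _ = ENNReal.ofReal α * ∫⁻ s in {s | |s| < R}, ENNReal.ofReal (|s| ^ (-l)) := by
          congr 1
          rw [← lintegral_indicator (measurableSet_lt (by fun_prop) measurable_const), ← lintegral_indicator (measurableSet_lt (by fun_prop) measurable_const),
            ← lintegral_sub_left_eq_self (Set.indicator {x : ℝ | |x| < R} _) t]
          rfl
      _ ≤ ENNReal.ofReal α * ENNReal.ofReal (2 / (1 - l) * R ^ (1 - l)) := mul_le_mul' le_rfl (kp_int_pow l hl0 hl1 R hR0.le)
      _ = _ := by
          rw [← ENNReal.ofReal_mul hα.le]; congr 1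
          rw [hR, ← Real.rpow_mul (by positivity), Real.div_rpow hn.le hα.le]
          have e1 : p' * (1 - l) = 2 - p' := by rw [hp', hl]; field_simp; ring
          have e2 : p' - 1 = 1 - (2 - p') := by ring
          rw [e1, e2, Real.rpow_sub hα 1, Real.rpow_one]; ring
  have far : ∫⁻ s in {s | R ≤ |t - s|}, a s * ENNReal.ofReal (|t - s| ^ (-l)) ≤
      ENNReal.ofReal (2 ^ (1 / p) * (α ^ (p' - 1) * n ^ (2 - p'))) := by
    have h1 := ENNReal.lintegral_mul_le_Lp_mul_Lq (volume.restrict {s | R ≤ |t - s|}) hconj ha.aemeasurable hk.aemeasurable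
    refine h1.trans ?_
    calc _ ≤ (ENNReal.ofReal (n ^ p')) ^ (1 / p') * (ENNReal.ofReal (2 / R)) ^ (1 / p) := by
          gcongr
          · exact (setLIntegral_le_lintegral _ _).trans hI
          · refine le_trans (le_of_eq ?_) (kp_int_inv_sq R hR0)
            rw [← lintegral_indicator (measurableSet_le measurable_const (by fun_prop)), ← lintegral_indicator (measurableSet_le measurable_const (by fun_prop)),
              ← lintegral_sub_left_eq_self (Set.indicator {x : ℝ | R ≤ |x|} _) t]
            congr 1; ext s
            simp only [Set.indicator, Set.mem_ofPred_eq]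
            split_ifs with h
            · rw [ENNReal.ofReal_rpow_of_pos (Real.rpow_pos_of_pos (hR0.trans_le h) _), ← Real.rpow_mul (abs_nonneg _)]
              congr 2; rw [hl]; field_simp
            · rfl
      _ = _ := by
          rw [ENNReal.ofReal_rpow_of_pos (by positivity), ENNReal.ofReal_rpow_of_pos (by positivity), ← ENNReal.ofReal_mul (by positivity)]
          congr 1
          rw [← Real.rpow_mul hn.le, mul_one_div_cancel hp'0.ne', Real.rpow_one, Real.div_rpow (by norm_num) hR0.le, hR, ← Real.rpow_mul (by positivity),
            Real.div_rpow hn.le hα.le]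
          have e1 : p' * (1 / p) = p' - 1 := by rw [hp']; field_simp; ring
          have e2 : 2 - p' = 1 - (p' - 1) := by ring
          rw [e1, e2, Real.rpow_sub hn 1, Real.rpow_one]
          field_simp
  calc _ ≤ ∫⁻ s in ({s | a s ≤ ENNReal.ofReal α} ∩ {s | |t - s| < R}) ∪ {s | R ≤ |t - s|}, a s * ENNReal.ofReal (|t - s| ^ (-l)) := by
        refine lintegral_mono_set fun s hs => ?_
        by_cases h : |t - s| < R
        · exact Or.inl ⟨hs, h⟩
        · exact Or.inr (not_lt.1 h)
    _ ≤ _ := lintegral_union_le _ _ _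
    _ ≤ _ := add_le_add near far
    _ = _ := by
      have : 0 < 1 - l := by linarith
      rw [← ENNReal.ofReal_add (by positivity) (by positivity)]; congr 1; ring

theorem kp_hls (p : ℝ) (hp : 2 < p) : ∃ C : ℝ, 0 < C ∧ ∀ (a : ℝ → ℝ≥0∞), Measurable a →
    ∫⁻ t, ∫⁻ s, a t * a s * ENNReal.ofReal (|t - s| ^ (-(2 / p))) ≤
      ENNReal.ofReal C * (∫⁻ s, a s ^ (p / (p - 1))) ^ (2 * (p - 1) / p) := by
  obtain ⟨C, hC, H⟩ := kp_hls_aux p hp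
  refine ⟨2 * C, by positivity, fun a ha => ?_⟩
  set p' := p / (p - 1) with hp'
  have hp1 : 0 < p - 1 := by linarith
  have hp'0 : 0 < p' := by positivity
  set N := ∫⁻ s, a s ^ p' with hN
  have hNe : 0 < 2 * (p - 1) / p := by positivity
  rcases eq_or_ne N ∞ with hinf | hfin
  · rw [hinf, ENNReal.top_rpow_of_pos hNe, ENNReal.mul_top (by simpa using hC)]; exact le_top
  have hae : ∀ᵐ t, a t < ∞ := by
    filter_upwards [ae_lt_top (ha.pow_const p') hfin] with t ht
    by_contra h
    rw [not_lt, top_le_iff] at h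
    rw [h, ENNReal.top_rpow_of_pos hp'0] at ht
    exact lt_irrefl _ ht
  rcases eq_or_ne N 0 with h0 | h0
  · have : ∀ᵐ t, a t = 0 := by
      filter_upwards [(lintegral_eq_zero_iff (ha.pow_const p')).1 h0] with t ht
      exact (ENNReal.rpow_eq_zero_iff_of_pos hp'0).1 ht
    refine le_trans (le_of_eq ?_) zero_le
    rw [lintegral_eq_zero_iff' (by fun_prop)]
    filter_upwards [this] with t ht
    simp [ht]
  set n := N.toReal ^ (1 / p') with hn
  have hNr : 0 < N.toReal := ENNReal.toReal_pos h0 hfin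
  have hn0 : 0 < n := by positivity
  have hIn : N ≤ ENNReal.ofReal (n ^ p') := by
    rw [hn, ← Real.rpow_mul hNr.le, one_div_mul_cancel hp'0.ne', Real.rpow_one, ENNReal.ofReal_toReal hfin]
  set k : ℝ → ℝ → ℝ≥0∞ := fun t s => ENNReal.ofReal (|t - s| ^ (-(2 / p))) with hk
  have hks : ∀ t s, k t s = k s t := fun t s => by simp only [hk]; rw [abs_sub_comm]
  have hkm : Measurable (Function.uncurry k) := by unfold Function.uncurry; fun_prop
  have main : ∫⁻ t, ∫⁻ s in {s | a s ≤ a t}, a t * a s * k t s ≤ ENNReal.ofReal C * N ^ (2 * (p - 1) / p) := by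
    calc _ ≤ ∫⁻ t, ENNReal.ofReal (C * n ^ (2 - p')) * a t ^ p' := by
          refine lintegral_mono_ae ?_
          filter_upwards [hae] with t ht
          rcases eq_or_ne (a t) 0 with hz | hz
          · simp [hz]
          have hα : 0 < (a t).toReal := ENNReal.toReal_pos hz ht.ne
          have := H a ha n (a t).toReal hn0 hα hIn t
          rw [ENNReal.ofReal_toReal ht.ne] at this
          simp_rw [mul_assoc]
          rw [lintegral_const_mul _ (by fun_prop)]
          refine (mul_le_mul' le_rfl this).trans_eq ?_
          nth_rw 1 [← ENNReal.ofReal_toReal ht.ne]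
          nth_rw 3 [← ENNReal.ofReal_toReal ht.ne]
          rw [ENNReal.ofReal_rpow_of_pos hα, ← ENNReal.ofReal_mul hα.le, ← ENNReal.ofReal_mul (by positivity)]
          congr 1
          rw [Real.rpow_sub hα, Real.rpow_one]
          field_simp
      _ = ENNReal.ofReal (C * n ^ (2 - p')) * N := lintegral_const_mul _ (by fun_prop)
      _ = _ := by
          rw [← ENNReal.ofReal_toReal hfin, ENNReal.ofReal_rpow_of_pos hNr, ← ENNReal.ofReal_mul (by positivity), ← ENNReal.ofReal_mul (by positivity)]
          congr 1
          rw [hn, ← Real.rpow_mul hNr.le, mul_assoc]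
          nth_rw 2 [← Real.rpow_one N.toReal]
          rw [← Real.rpow_add hNr]
          congr 2
          rw [hp']; field_simp; ring
  have hm2 : ∀ t, MeasurableSet {s | a s ≤ a t} := fun t => measurableSet_le ha measurable_const
  have hm3 : ∀ t, MeasurableSet {s | a t ≤ a s} := fun t => measurableSet_le measurable_const ha
  have swap : ∫⁻ t, ∫⁻ s in {s | a t ≤ a s}, a t * a s * k t s = ∫⁻ t, ∫⁻ s in {s | a s ≤ a t}, a t * a s * k t s := by
    simp_rw [← lintegral_indicator (hm2 _), ← lintegral_indicator (hm3 _)]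
    rw [lintegral_lintegral_swap]
    · refine lintegral_congr fun t => lintegral_congr fun s => ?_
      simp only [Set.indicator, Set.mem_ofPred_eq]
      rw [hks s t, mul_comm (a s)]
    · refine Measurable.aemeasurable ?_
      have : Measurable (({z : ℝ × ℝ | a z.1 ≤ a z.2}).indicator fun z : ℝ × ℝ => a z.1 * a z.2 * k z.1 z.2) := by
        refine Measurable.indicator (((ha.comp measurable_fst).mul (ha.comp measurable_snd)).mul hkm) (measurableSet_le (ha.comp measurable_fst) (ha.comp measurable_snd))
      exact this
  calc ∫⁻ t, ∫⁻ s, a t * a s * k t s ≤ ∫⁻ t, ((∫⁻ s in {s | a s ≤ a t}, a t * a s * k t s) + ∫⁻ s in {s | a t ≤ a s}, a t * a s * k t s) := by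
        refine lintegral_mono fun t => ?_
        refine le_trans ?_ (lintegral_union_le _ _ _)
        rw [← setLIntegral_univ]
        refine lintegral_mono_set fun s _ => ?_
        rcases le_total (a s) (a t) with h | h
        · exact Or.inl h
        · exact Or.inr h
    _ = (∫⁻ t, ∫⁻ s in {s | a s ≤ a t}, a t * a s * k t s) + ∫⁻ t, ∫⁻ s in {s | a t ≤ a s}, a t * a s * k t s := by
        refine lintegral_add_left ?_ _
        simp_rw [← lintegral_indicator (hm2 _)]
        have : Measurable (({z : ℝ × ℝ | a z.2 ≤ a z.1}).indicator fun z : ℝ × ℝ => a z.1 * a z.2 * k z.1 z.2) := by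
          refine Measurable.indicator (((ha.comp measurable_fst).mul (ha.comp measurable_snd)).mul hkm) (measurableSet_le (ha.comp measurable_snd) (ha.comp measurable_fst))
        exact Measurable.lintegral_prod_right' this
    _ ≤ _ := by
        rw [swap, ENNReal.ofReal_mul (by norm_num), mul_assoc]
        have : ENNReal.ofReal 2 = 2 := by norm_num
        rw [this, two_mul]
        exact add_le_add main main


theorem kpFT_meas2 {S : Type*} [MeasurableSpace S] (F : S → E2 → ℂ) (hF : StronglyMeasurable (Function.uncurry F)) :
    StronglyMeasurable (fun z : S × E2 => kpFT (F z.1) z.2) := by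
  unfold kpFT
  refine StronglyMeasurable.integral_prod_right' (f := fun w : (S × E2) × E2 =>
    Complex.exp (Complex.I * ((inner ℝ w.1.2 w.2 : ℝ) : ℂ)) * F w.1.1 w.2) ?_
  have h : Continuous fun v : E2 × E2 => Complex.exp (Complex.I * ((inner ℝ v.1 v.2 : ℝ) : ℂ)) := by fun_prop
  refine StronglyMeasurable.mul (h.stronglyMeasurable.comp_measurable (g := fun w : (S × E2) × E2 => (w.1.2, w.2)) (by fun_prop))
    (hF.comp_measurable (g := fun w : (S × E2) × E2 => (w.1.1, w.2)) (by fun_prop))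

theorem kp_exps (p q : ℝ) (hq : 2 < q) (hp : 2 < p) (h : 1 / p + 1 / q = 1 / 2) : (q - 2) / q = 2 / p := by
  have h1 : 0 < p := by linarith
  have h2 : 0 < q := by linarith
  have : 1 / p = 1 / 2 - 1 / q := by linarith
  rw [show 2 / p = 2 * (1 / p) by ring, this]
  field_simp

open Complex in
theorem kp_dual (p q : ℝ) (hq : 2 < q) (hp : 2 < p) (hpq : 1 / p + 1 / q = 1 / 2) : ∃ C : ℝ, 0 < C ∧ ∀ F : ℝ → E2 → ℂ,
    StronglyMeasurable (Function.uncurry F) → Integrable (Function.uncurry F) (volume.prod volume) → (∀ t, Integrable (F t)) →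
    ∫⁻ η, ‖∫ t : ℝ, cexp (I * ((-t * ‖η‖ ^ 2 : ℝ) : ℂ)) * kpFT (F t) η‖ₑ ^ 2 ≤ ENNReal.ofReal C *
     (∫⁻ t, ((∫⁻ y, ‖F t y‖ₑ ^ (q / (q - 1))) ^ ((q - 1) / q)) ^ (p / (p - 1))) ^ (2 * (p - 1) / p) := by
  obtain ⟨C₁, hC₁, HJ⟩ := kp_J q hq
  obtain ⟨C₂, hC₂, HL⟩ := kp_hls p hp
  refine ⟨C₁ * C₂, by positivity, fun F hF hI hIt => ?_⟩
  have hFt : ∀ t, StronglyMeasurable (F t) := fun t => hF.comp_measurable (g := fun y => (t, y)) (by fun_prop)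
  set a : ℝ → ℝ≥0∞ := fun t => (∫⁻ y, ‖F t y‖ₑ ^ (q / (q - 1))) ^ ((q - 1) / q) with ha
  have ham : Measurable a := by
    refine Measurable.pow_const ?_ _
    exact Measurable.lintegral_prod_right' (f := fun z : ℝ × E2 => ‖Function.uncurry F z‖ₑ ^ (q / (q - 1))) (hF.measurable.enorm.pow_const _)
  have hexp : Continuous fun z : ℝ × E2 => cexp (I * ((-z.1 * ‖z.2‖ ^ 2 : ℝ) : ℂ)) := by fun_prop
  refine kp_TT (volume : Measure ℝ) (fun t η => cexp (I * ((-t * ‖η‖ ^ 2 : ℝ) : ℂ)) * kpFT (F t) η)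
    (hexp.stronglyMeasurable.mul (kpFT_meas2 F hF)) (fun t => ∫ y, ‖F t y‖) hI.integral_norm_prod_left
    (fun t η => ?_) _ (fun ε hε => ?_)
  · rw [norm_mul, kp_norm_expI, one_mul]; exact kpFT_norm_le _ _
  · calc _ ≤ ∫⁻ t, ∫⁻ s, ENNReal.ofReal C₁ * (a t * a s * ENNReal.ofReal (|t - s| ^ (-(2 / p)))) := by
          refine lintegral_mono fun t => lintegral_mono_ae ?_
          have : ∀ᵐ s : ℝ, s ≠ t := by simp [ae_iff]
          filter_upwards [this] with s hs
          refine (HJ ε t s hε hs.symm (F t) (F s) (hFt t) (hIt t) (hFt s) (hIt s)).trans_eq ?_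
          rw [kp_exps p q hq hp hpq, ha]
          ring
      _ = ENNReal.ofReal C₁ * ∫⁻ t, ∫⁻ s, a t * a s * ENNReal.ofReal (|t - s| ^ (-(2 / p))) := by
          rw [← lintegral_const_mul' _ _ (by simp)]
          refine lintegral_congr fun t => ?_
          rw [lintegral_const_mul' _ _ (by simp)]
      _ ≤ _ := by
          rw [ENNReal.ofReal_mul hC₁.le, mul_assoc]
          exact mul_le_mul' le_rfl (HL a ham)


open Complex in
theorem kp_pairing (h f : E2 → ℂ) (mh : StronglyMeasurable h) (jh : Integrable h) (mf : StronglyMeasurable f) (jf : Integrable f) :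
    ∫ y, kpFT h y * f y = ∫ η, h η * kpFT f η := by
  unfold kpFT
  simp_rw [← integral_mul_const, ← integral_const_mul]
  rw [integral_integral_swap]
  · congr 1; ext η
    congr 1; ext y
    rw [real_inner_comm]; ring
  · have hI := jf.mul_prod jh
    refine hI.norm.mono' ?_ (Eventually.of_forall fun z => ?_)
    · refine StronglyMeasurable.aestronglyMeasurable ?_
      exact StronglyMeasurable.mul (StronglyMeasurable.mul (Continuous.stronglyMeasurable (by fun_prop)) (mh.comp_measurable measurable_snd))
        (mf.comp_measurable measurable_fst)
    · simp only [Function.uncurry]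
      rw [norm_mul, norm_mul, kp_norm_expI, one_mul, norm_mul, mul_comm]

def kpW (g : E2 → ℂ) (t : ℝ) (y : E2) : ℂ := kpFT (fun η => Complex.exp (Complex.I * ((-t * ‖η‖ ^ 2 : ℝ) : ℂ)) * g η) y

open Complex in
theorem kp_eg (g : E2 → ℂ) (mg : StronglyMeasurable g) (jg : Integrable g) (t : ℝ) :
    StronglyMeasurable (fun η : E2 => cexp (I * ((-t * ‖η‖ ^ 2 : ℝ) : ℂ)) * g η) ∧
    Integrable (fun η : E2 => cexp (I * ((-t * ‖η‖ ^ 2 : ℝ) : ℂ)) * g η) := by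
  have h : StronglyMeasurable (fun η : E2 => cexp (I * ((-t * ‖η‖ ^ 2 : ℝ) : ℂ)) * g η) :=
    StronglyMeasurable.mul (Continuous.stronglyMeasurable (by fun_prop)) mg
  refine ⟨h, jg.norm.mono' h.aestronglyMeasurable (Eventually.of_forall fun η => ?_)⟩
  rw [norm_mul, kp_norm_expI, one_mul]

theorem kpW_meas (g : E2 → ℂ) (mg : StronglyMeasurable g) : StronglyMeasurable (Function.uncurry (kpW g)) := by
  unfold kpW Function.uncurry
  refine kpFT_meas2 (fun (t : ℝ) (η : E2) => Complex.exp (Complex.I * ((-t * ‖η‖ ^ 2 : ℝ) : ℂ)) * g η) ?_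
  exact StronglyMeasurable.mul (Continuous.stronglyMeasurable (by fun_prop)) (mg.comp_measurable measurable_snd)

theorem kpW_le (g : E2 → ℂ) (t : ℝ) (y : E2) : ‖kpW g t y‖ ≤ ∫ η, ‖g η‖ := by
  refine (kpFT_norm_le _ _).trans_eq ?_
  congr 1; ext η
  rw [norm_mul, kp_norm_expI, one_mul]

open Complex in
theorem kp_pair2 (g : E2 → ℂ) (mg : StronglyMeasurable g) (jg : Integrable g) (F : ℝ → E2 → ℂ)
    (hF : StronglyMeasurable (Function.uncurry F)) (hI : Integrable (Function.uncurry F) (volume.prod volume)) (hIt : ∀ t, Integrable (F t)) :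
    ‖∫ t, ∫ y, kpW g t y * F t y‖ₑ ≤ (∫⁻ η, ‖g η‖ₑ ^ 2) ^ (1 / 2 : ℝ) *
      (∫⁻ η, ‖∫ t : ℝ, cexp (I * ((-t * ‖η‖ ^ 2 : ℝ) : ℂ)) * kpFT (F t) η‖ₑ ^ 2) ^ (1 / 2 : ℝ) := by
  have hFt : ∀ t, StronglyMeasurable (F t) := fun t => hF.comp_measurable (g := fun y => (t, y)) (by fun_prop)
  have hexp : Continuous fun z : ℝ × E2 => cexp (I * ((-z.1 * ‖z.2‖ ^ 2 : ℝ) : ℂ)) := by fun_prop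
  have e1 : ∫ t, ∫ y, kpW g t y * F t y = ∫ η, g η * ∫ t : ℝ, cexp (I * ((-t * ‖η‖ ^ 2 : ℝ) : ℂ)) * kpFT (F t) η := by
    have : ∀ t, ∫ y, kpW g t y * F t y = ∫ η, g η * (cexp (I * ((-t * ‖η‖ ^ 2 : ℝ) : ℂ)) * kpFT (F t) η) := by
      intro t
      unfold kpW
      rw [kp_pairing _ _ (kp_eg g mg jg t).1 (kp_eg g mg jg t).2 (hFt t) (hIt t)]
      congr 1; ext η; ring
    simp_rw [this, ← integral_const_mul]
    rw [integral_integral_swap]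
    have hb := hI.integral_norm_prod_left.mul_prod jg.norm
    refine hb.mono' ?_ (Eventually.of_forall fun z => ?_)
    · refine StronglyMeasurable.aestronglyMeasurable ?_
      exact (mg.comp_measurable measurable_snd).mul (hexp.stronglyMeasurable.mul (kpFT_meas2 F hF))
    · simp only [Function.uncurry]
      rw [norm_mul, norm_mul, kp_norm_expI, one_mul, mul_comm]
      gcongr
      exact kpFT_norm_le _ _
  rw [e1]
  have hΦ : StronglyMeasurable fun η : E2 => ∫ t : ℝ, cexp (I * ((-t * ‖η‖ ^ 2 : ℝ) : ℂ)) * kpFT (F t) η := by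
    refine StronglyMeasurable.integral_prod_left' (f := fun z : ℝ × E2 => cexp (I * ((-z.1 * ‖z.2‖ ^ 2 : ℝ) : ℂ)) * kpFT (F z.1) z.2) ?_
    exact (hexp.stronglyMeasurable.mul (kpFT_meas2 F hF))
  have := ENNReal.lintegral_mul_le_Lp_mul_Lq (volume : Measure E2) Real.HolderConjugate.two_two mg.measurable.enorm.aemeasurable hΦ.measurable.enorm.aemeasurable
  simp only [ENNReal.rpow_ofNat] at this
  refine le_trans ?_ this
  refine (enorm_integral_le_lintegral_enorm _).trans_eq (lintegral_congr fun η => ?_)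
  rw [enorm_mul]; rfl


theorem kp_le_add_pow (x : ℝ≥0∞) (r : ℝ) (hr : 1 ≤ r) : x ≤ 1 + x ^ r := by
  rcases le_total x 1 with h | h
  · exact h.trans le_self_add
  · calc x = x ^ (1:ℝ) := (ENNReal.rpow_one x).symm
      _ ≤ x ^ r := ENNReal.rpow_le_rpow_of_exponent_le h hr
      _ ≤ _ := le_add_self

theorem kp_absorb (X A c : ℝ≥0∞) (p : ℝ) (hp : 2 < p) (hX : X ≠ ∞)
    (h : X ≤ A ^ (1 / 2 : ℝ) * (c * X ^ (2 * (p - 1) / p)) ^ (1 / 2 : ℝ)) : X ≤ c ^ (p / 2) * A ^ (p / 2) := by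
  rcases eq_or_ne X 0 with h0 | h0
  · rw [h0]; exact zero_le
  rw [ENNReal.mul_rpow_of_nonneg _ _ (by norm_num), ← ENNReal.rpow_mul, ← mul_assoc] at h
  have h1 : X ^ (1 / p) ≤ A ^ (1 / 2 : ℝ) * c ^ (1 / 2 : ℝ) := by
    have e : X ^ (1 / p) = X * (X ^ (2 * (p - 1) / p * (1 / 2)))⁻¹ := by
      rw [← ENNReal.rpow_neg]
      nth_rw 2 [← ENNReal.rpow_one X]
      rw [← ENNReal.rpow_add _ _ h0 hX]
      congr 1; field_simp; ring
    rw [e, ← div_eq_mul_inv]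
    exact ENNReal.div_le_of_le_mul h
  have h2 := ENNReal.rpow_le_rpow h1 (show 0 ≤ p by linarith)
  rw [← ENNReal.rpow_mul, one_div_mul_cancel (by linarith), ENNReal.rpow_one, ENNReal.mul_rpow_of_nonneg _ _ (by linarith), ← ENNReal.rpow_mul, ← ENNReal.rpow_mul] at h2
  rw [mul_comm]
  rw [show 1 / 2 * p = p / 2 by ring] at h2
  exact h2

theorem kp_str_trunc (p q : ℝ) (hq : 2 < q) (hp : 2 < p) (hpq : 1 / p + 1 / q = 1 / 2) : ∃ C : ℝ, 0 < C ∧ ∀ g : E2 → ℂ,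
    StronglyMeasurable g → Integrable g → ∀ (B : Set ℝ) (D : Set E2), MeasurableSet B → MeasurableSet D → volume B ≠ ∞ → volume D ≠ ∞ →
    ∫⁻ t in B, (∫⁻ y in D, ‖kpW g t y‖ₑ ^ q) ^ (p / q) ≤ ENNReal.ofReal C * (∫⁻ η, ‖g η‖ₑ ^ 2) ^ (p / 2) := by
  obtain ⟨C, hC, H⟩ := kp_dual p q hq hp hpq
  refine ⟨C ^ (p / 2), by positivity, fun g mg jg B D hB hD hBf hDf => ?_⟩
  set w := kpW g with hw
  have hwm : StronglyMeasurable (Function.uncurry w) := kpW_meas g mg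
  have hwt : ∀ t, StronglyMeasurable (w t) := fun t => hwm.comp_measurable (g := fun y => (t, y)) (by fun_prop)
  set G := ∫ η, ‖g η‖ with hG
  have hG0 : 0 ≤ G := integral_nonneg fun _ => norm_nonneg _
  have hwG : ∀ t y, ‖w t y‖ ≤ G := fun t y => kpW_le g t y
  have hq1 : 0 < q - 1 := by linarith
  have hp1 : 0 < p - 1 := by linarith
  have hpe : 0 < (p - 1) * (q / (q - 1)) := mul_pos hp1 (div_pos (by linarith) hq1)
  set M : ℝ → ℝ≥0∞ := fun t => ∫⁻ y in D, ‖w t y‖ₑ ^ q with hM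
  have hMm : Measurable M := Measurable.lintegral_prod_right' (f := fun z : ℝ × E2 => ‖Function.uncurry w z‖ₑ ^ q) (hwm.measurable.enorm.pow_const _)
  set K : ℝ≥0∞ := ENNReal.ofReal (G ^ q) * volume D with hK
  have hKf : K ≠ ∞ := ENNReal.mul_ne_top (by simp) hDf
  have hMK : ∀ t, M t ≤ K := by
    intro t
    calc M t ≤ ∫⁻ y in D, ENNReal.ofReal (G ^ q) := by
          refine lintegral_mono fun y => ?_
          rw [← ENNReal.ofReal_rpow_of_nonneg hG0 (by linarith), ← ofReal_norm]
          exact ENNReal.rpow_le_rpow (ENNReal.ofReal_le_ofReal (hwG t y)) (by linarith)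
      _ = K := by rw [setLIntegral_const]
  have hMf : ∀ t, M t ≠ ∞ := fun t => ne_top_of_le_ne_top hKf (hMK t)
  set n : ℝ → ℝ := fun t => (M t).toReal ^ (1 / q) with hn
  have hn0 : ∀ t, 0 ≤ n t := fun t => by positivity
  have hnm : Measurable n := hMm.ennreal_toReal.pow_const _
  set k : ℝ := K.toReal ^ (1 / q) with hk
  have hk0 : 0 ≤ k := by positivity
  have hnk : ∀ t, n t ≤ k := fun t => Real.rpow_le_rpow (by positivity) (ENNReal.toReal_mono hKf (hMK t)) (by positivity)
  have hMn : ∀ t, M t = ENNReal.ofReal (n t ^ q) := by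
    intro t
    rw [hn]; simp only
    rw [← Real.rpow_mul ENNReal.toReal_nonneg, one_div_mul_cancel (by linarith), Real.rpow_one, ENNReal.ofReal_toReal (hMf t)]
  set F : ℝ → E2 → ℂ := fun t y => (B ×ˢ D).indicator (fun z : ℝ × E2 => (starRingEnd ℂ) (w z.1 z.2) * ((‖w z.1 z.2‖ ^ (q - 2) * n z.1 ^ (p - q) : ℝ) : ℂ)) (t, y) with hF
  have hFm : StronglyMeasurable (Function.uncurry F) := by
    refine StronglyMeasurable.indicator ?_ (hB.prod hD)
    refine (Complex.continuous_conj.comp_stronglyMeasurable hwm).mul ?_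
    refine Complex.continuous_ofReal.comp_stronglyMeasurable ?_
    refine Measurable.stronglyMeasurable ?_
    exact (hwm.measurable.norm.pow_const _).mul ((hnm.comp measurable_fst).pow_const _)
  have hFt : ∀ t, StronglyMeasurable (F t) := fun t => hFm.comp_measurable (g := fun y => (t, y)) (by fun_prop)
  have hFn : ∀ t y, ‖F t y‖ₑ = B.indicator (fun t => D.indicator (fun y => ‖w t y‖ₑ ^ (q - 1) * ENNReal.ofReal (n t ^ (p - q))) y) t := by
    intro t y
    simp only [hF]
    by_cases hb : t ∈ B
    swap
    · rw [Set.indicator_of_notMem (fun h => hb h.1), Set.indicator_of_notMem hb, enorm_zero]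
    by_cases hd : y ∈ D
    swap
    · rw [Set.indicator_of_notMem (fun h => hd h.2), Set.indicator_of_mem hb, Set.indicator_of_notMem hd, enorm_zero]
    rw [Set.indicator_of_mem (Set.mk_mem_prod hb hd), Set.indicator_of_mem hb, Set.indicator_of_mem hd]
    rw [← ofReal_norm, norm_mul, RCLike.norm_conj, Complex.norm_of_nonneg (mul_nonneg (Real.rpow_nonneg (norm_nonneg _) _) (Real.rpow_nonneg (hn0 t) _)),
      ← mul_assoc, ENNReal.ofReal_mul (by positivity), ← ofReal_norm, ENNReal.ofReal_rpow_of_nonneg (norm_nonneg _) hq1.le]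
    congr 2
    rcases (norm_nonneg (w t y)).eq_or_lt with h | h
    · rw [← h, Real.zero_rpow hq1.ne', zero_mul]
    · rw [show q - 1 = 1 + (q - 2) by ring, Real.rpow_add h, Real.rpow_one]
  have hwF : ∀ t y, w t y * F t y = (((B ×ˢ D).indicator (fun z : ℝ × E2 => ‖w z.1 z.2‖ ^ q * n z.1 ^ (p - q)) (t, y) : ℝ) : ℂ) := by
    intro t y
    simp only [hF]
    by_cases hz : (t, y) ∈ B ×ˢ D
    swap
    · rw [Set.indicator_of_notMem hz, Set.indicator_of_notMem hz, mul_zero, Complex.ofReal_zero]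
    rw [Set.indicator_of_mem hz, Set.indicator_of_mem hz]
    rw [← mul_assoc, Complex.mul_conj, ← Complex.ofReal_mul, Complex.normSq_eq_norm_sq, ← mul_assoc]
    congr 2
    rcases (norm_nonneg (w t y)).eq_or_lt with h | h
    · rw [← h, Real.zero_rpow (by linarith : q ≠ 0)]; simp
    · rw [← Real.rpow_two, ← Real.rpow_add h]; congr 1; ring
  have hFq : ∀ t, ∫⁻ y, ‖F t y‖ₑ ^ (q / (q - 1)) = B.indicator (fun t => ENNReal.ofReal (n t ^ ((p - 1) * (q / (q - 1))))) t := by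
    intro t
    by_cases hb : t ∈ B
    · have : ∀ y, ‖F t y‖ₑ ^ (q / (q - 1)) = D.indicator (fun y => ENNReal.ofReal (n t ^ (p - q)) ^ (q / (q - 1)) * ‖w t y‖ₑ ^ q) y := by
        intro y
        rw [hFn, Set.indicator_of_mem hb]
        by_cases hd : y ∈ D
        · rw [Set.indicator_of_mem hd, Set.indicator_of_mem hd, ENNReal.mul_rpow_of_nonneg _ _ (by positivity), ← ENNReal.rpow_mul, mul_comm]
          congr 2; field_simp
        · rw [Set.indicator_of_notMem hd, Set.indicator_of_notMem hd, ENNReal.zero_rpow_of_pos (by positivity)]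
      simp_rw [this]
      rw [lintegral_indicator hD, lintegral_const_mul _ ((hwt t).measurable.enorm.pow_const _), Set.indicator_of_mem hb]
      change _ * M t = _
      rw [hMn]
      rcases (hn0 t).eq_or_lt with h | h
      · rw [← h, Real.zero_rpow (by linarith : q ≠ 0), Real.zero_rpow hpe.ne']; simp
      · rw [ENNReal.ofReal_rpow_of_pos (by positivity), ← ENNReal.ofReal_mul (by positivity), ← Real.rpow_mul h.le, ← Real.rpow_add h]
        congr 2; field_simp; ring
    · simp_rw [hFn, Set.indicator_of_notMem hb, ENNReal.zero_rpow_of_pos (show 0 < q / (q - 1) by positivity)]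
      simp
  have hF1 : ∀ t, ∫⁻ y, ‖F t y‖ₑ ≤ B.indicator (fun t => volume D + ENNReal.ofReal (k ^ ((p - 1) * (q / (q - 1))))) t := by
    intro t
    by_cases hb : t ∈ B
    · rw [Set.indicator_of_mem hb]
      calc _ ≤ ∫⁻ y, (D.indicator 1 y + ‖F t y‖ₑ ^ (q / (q - 1))) := by
            refine lintegral_mono fun y => ?_
            by_cases hd : y ∈ D
            · rw [Set.indicator_of_mem hd]
              exact kp_le_add_pow _ _ (by rw [le_div_iff₀ hq1]; linarith)
            · simp only [hFn, Set.indicator_of_mem hb, Set.indicator_of_notMem hd]; exact zero_le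
        _ = volume D + ENNReal.ofReal (n t ^ ((p - 1) * (q / (q - 1)))) := by
            rw [lintegral_add_left (measurable_one.indicator hD), lintegral_indicator_one hD, hFq, Set.indicator_of_mem hb]
        _ ≤ _ := by
            have : 0 < q := by linarith
            exact add_le_add le_rfl (ENNReal.ofReal_le_ofReal (Real.rpow_le_rpow (hn0 t) (hnk t) (by positivity)))
    · simp_rw [hFn, Set.indicator_of_notMem hb]; simp
  have hFt1 : ∀ t, Integrable (F t) := fun t => by
    refine ⟨(hFt t).aestronglyMeasurable, (hF1 t).trans_lt ?_⟩
    unfold Set.indicator; split_ifs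
    · exact ENNReal.add_lt_top.2 ⟨hDf.lt_top, ENNReal.ofReal_lt_top⟩
    · simp
  have hFI : Integrable (Function.uncurry F) (volume.prod volume) := by
    refine ⟨hFm.aestronglyMeasurable, ?_⟩
    unfold HasFiniteIntegral
    rw [lintegral_prod _ hFm.measurable.enorm.aemeasurable]
    refine (lintegral_mono hF1).trans_lt ?_
    rw [lintegral_indicator hB, setLIntegral_const]
    exact ENNReal.mul_lt_top (ENNReal.add_lt_top.2 ⟨hDf.lt_top, ENNReal.ofReal_lt_top⟩) hBf.lt_top
  set X : ℝ≥0∞ := ∫⁻ t in B, ENNReal.ofReal (n t ^ p) with hX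
  have hXM : ∫⁻ t in B, M t ^ (p / q) = X := by
    refine lintegral_congr fun t => ?_
    rw [hMn, ENNReal.ofReal_rpow_of_nonneg (Real.rpow_nonneg (hn0 t) _) (by positivity), ← Real.rpow_mul (hn0 t)]
    congr 2; field_simp
  have hXf : X ≠ ∞ := by
    refine ne_top_of_le_ne_top ?_ (b := ∫⁻ t in B, ENNReal.ofReal (k ^ p)) ?_
    · rw [setLIntegral_const]; exact ENNReal.mul_ne_top (by simp) hBf
    · exact lintegral_mono fun t => ENNReal.ofReal_le_ofReal (Real.rpow_le_rpow (hn0 t) (hnk t) (by linarith))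
  have hXF : ∫⁻ t, ((∫⁻ y, ‖F t y‖ₑ ^ (q / (q - 1))) ^ ((q - 1) / q)) ^ (p / (p - 1)) = X := by
    rw [hX, ← lintegral_indicator hB]
    refine lintegral_congr fun t => ?_
    rw [hFq]
    by_cases hb : t ∈ B
    · rw [Set.indicator_of_mem hb, Set.indicator_of_mem hb, ← ENNReal.rpow_mul, ENNReal.ofReal_rpow_of_nonneg (Real.rpow_nonneg (hn0 t) _) (by positivity), ← Real.rpow_mul (hn0 t)]
      congr 2; field_simp
    · rw [Set.indicator_of_notMem hb, Set.indicator_of_notMem hb, ENNReal.zero_rpow_of_pos (by positivity), ENNReal.zero_rpow_of_pos (by positivity)]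
  have hXe : ‖∫ t, ∫ y, w t y * F t y‖ₑ = X := by
    set r : ℝ × E2 → ℝ := (B ×ˢ D).indicator (fun z : ℝ × E2 => ‖w z.1 z.2‖ ^ q * n z.1 ^ (p - q)) with hr
    have hr0 : ∀ z, 0 ≤ r z := fun z => Set.indicator_nonneg (fun z _ => mul_nonneg (Real.rpow_nonneg (norm_nonneg _) _) (Real.rpow_nonneg (hn0 _) _)) z
    have hI2 : Integrable (fun z : ℝ × E2 => w z.1 z.2 * F z.1 z.2) (volume.prod volume) :=
      hFI.bdd_mul (c := G) hwm.aestronglyMeasurable (Eventually.of_forall fun z => hwG z.1 z.2)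
    have hIr : Integrable r (volume.prod volume) := by
      have : r = fun z : ℝ × E2 => (w z.1 z.2 * F z.1 z.2).re := by
        ext z; rw [hwF]; rfl
      rw [this]; exact hI2.re
    rw [← integral_prod (fun z : ℝ × E2 => w z.1 z.2 * F z.1 z.2) hI2]
    have : ∀ z : ℝ × E2, w z.1 z.2 * F z.1 z.2 = (r z : ℂ) := fun z => hwF z.1 z.2
    simp_rw [this]
    rw [integral_complex_ofReal, ← ofReal_norm, Complex.norm_of_nonneg (integral_nonneg hr0), ofReal_integral_eq_lintegral_ofReal hIr (Eventually.of_forall hr0),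
      lintegral_prod _ hIr.aestronglyMeasurable.aemeasurable.ennreal_ofReal, hX, ← lintegral_indicator hB]
    refine lintegral_congr fun t => ?_
    by_cases hb : t ∈ B
    · have : ∀ y, ENNReal.ofReal (r (t, y)) = D.indicator (fun y => ENNReal.ofReal (n t ^ (p - q)) * ‖w t y‖ₑ ^ q) y := by
        intro y
        by_cases hd : y ∈ D
        · rw [hr, Set.indicator_of_mem (Set.mk_mem_prod hb hd), Set.indicator_of_mem hd, mul_comm, ENNReal.ofReal_mul (Real.rpow_nonneg (hn0 t) _), ← ofReal_norm,
            ENNReal.ofReal_rpow_of_nonneg (norm_nonneg _) (by linarith)]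
        · rw [hr, Set.indicator_of_notMem (fun h => hd h.2), Set.indicator_of_notMem hd, ENNReal.ofReal_zero]
      simp_rw [this]
      rw [lintegral_indicator hD, lintegral_const_mul _ ((hwt t).measurable.enorm.pow_const _), Set.indicator_of_mem hb]
      change _ * M t = _
      rw [hMn]
      rcases (hn0 t).eq_or_lt with h | h
      · rw [← h, Real.zero_rpow (by linarith : q ≠ 0), Real.zero_rpow (by linarith : p ≠ 0)]; simp
      · rw [← ENNReal.ofReal_mul (by positivity), ← Real.rpow_add h]
        congr 2; ring
    · rw [Set.indicator_of_notMem hb]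
      have : ∀ y, r (t, y) = 0 := fun y => by rw [hr, Set.indicator_of_notMem (fun h => hb h.1)]
      simp [this]
  rw [hXM]
  have h1 := kp_pair2 g mg jg F hFm hFI hFt1
  have h2 := H F hFm hFI hFt1
  rw [hXe] at h1
  rw [hXF] at h2
  rw [← ENNReal.ofReal_rpow_of_pos hC]
  refine kp_absorb X _ _ p hp hXf (h1.trans (mul_le_mul' le_rfl (ENNReal.rpow_le_rpow h2 (by norm_num))))


theorem kp_tendsto_ball {E : Type*} [NormedAddCommGroup E] [MeasurableSpace E] [OpensMeasurableSpace E] (μ : Measure E) (f : E → ℝ≥0∞) (hf : Measurable f) :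
    Tendsto (fun n : ℕ => ∫⁻ y in Metric.closedBall (0 : E) n, f y ∂μ) atTop (nhds (∫⁻ y, f y ∂μ)) := by
  simp_rw [← lintegral_indicator (Metric.isClosed_closedBall.measurableSet)]
  refine lintegral_tendsto_of_tendsto_of_monotone (fun n => (hf.indicator Metric.isClosed_closedBall.measurableSet).aemeasurable) ?_ ?_
  · refine Eventually.of_forall fun y n m hnm => ?_
    exact Set.indicator_le_indicator_of_subset (Metric.closedBall_subset_closedBall (by exact_mod_cast hnm)) (fun _ => zero_le) y
  · refine Eventually.of_forall fun y => ?_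
    obtain ⟨N, hN⟩ := exists_nat_ge ‖y‖
    refine tendsto_const_nhds.congr' ?_
    filter_upwards [eventually_ge_atTop N] with n hn
    rw [Set.indicator_of_mem]
    rw [mem_closedBall_zero_iff]
    exact hN.trans (by exact_mod_cast hn)

theorem kp_str (p q : ℝ) (hq : 2 < q) (hp : 2 < p) (hpq : 1 / p + 1 / q = 1 / 2) : ∃ C : ℝ, 0 < C ∧ ∀ g : E2 → ℂ,
    StronglyMeasurable g → Integrable g →
    ∫⁻ t, (∫⁻ y, ‖kpW g t y‖ₑ ^ q) ^ (p / q) ≤ ENNReal.ofReal C * (∫⁻ η, ‖g η‖ₑ ^ 2) ^ (p / 2) := by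
  obtain ⟨C, hC, H⟩ := kp_str_trunc p q hq hp hpq
  refine ⟨C, hC, fun g mg jg => ?_⟩
  have hwm := (kpW_meas g mg).measurable
  have hwt : ∀ t, Measurable (kpW g t) := fun t => hwm.comp (g := Function.uncurry (kpW g)) (f := fun y => (t, y)) (by fun_prop)
  have hpq0 : 0 ≤ p / q := by apply div_nonneg <;> linarith
  have hMm : ∀ D : Set E2, Measurable fun t => (∫⁻ y in D, ‖kpW g t y‖ₑ ^ q) ^ (p / q) := fun D =>
    (Measurable.lintegral_prod_right' (f := fun z : ℝ × E2 => ‖Function.uncurry (kpW g) z‖ₑ ^ q) (hwm.enorm.pow_const _)).pow_const _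
  have hD : ∀ m : ℕ, ∫⁻ t, (∫⁻ y in Metric.closedBall 0 m, ‖kpW g t y‖ₑ ^ q) ^ (p / q) ≤ ENNReal.ofReal C * (∫⁻ η, ‖g η‖ₑ ^ 2) ^ (p / 2) := by
    intro m
    refine le_of_tendsto' (kp_tendsto_ball volume _ (hMm _)) fun n => ?_
    exact H g mg jg _ _ Metric.isClosed_closedBall.measurableSet Metric.isClosed_closedBall.measurableSet
      (isCompact_closedBall _ _).measure_lt_top.ne (isCompact_closedBall _ _).measure_lt_top.ne
  refine le_of_tendsto' (lintegral_tendsto_of_tendsto_of_monotone (fun m : ℕ => (hMm (Metric.closedBall 0 m)).aemeasurable) ?_ ?_) hD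
  · refine Eventually.of_forall fun t n m hnm => ?_
    exact ENNReal.rpow_le_rpow (lintegral_mono_set (Metric.closedBall_subset_closedBall (by exact_mod_cast hnm))) hpq0
  · refine Eventually.of_forall fun t => ?_
    exact (ENNReal.continuous_rpow_const.tendsto _).comp (kp_tendsto_ball volume _ ((hwt t).enorm.pow_const _))

theorem kp_lint_div (f : ℝ → ℝ≥0∞) (hf : Measurable f) (ξ : ℝ) (hξ : ξ ≠ 0) : ∫⁻ t, f (t / ξ) = ENNReal.ofReal |ξ| * ∫⁻ t, f t := by
  have h := Real.map_volume_mul_right (inv_ne_zero hξ)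
  rw [inv_inv] at h
  have := lintegral_map (μ := volume) hf (measurable_mul_const ξ⁻¹)
  rw [h, lintegral_smul_measure] at this
  simp_rw [div_eq_mul_inv]
  exact this.symm

theorem kp_str_scaled (p q : ℝ) (hq : 2 < q) (hp : 2 < p) (hpq : 1 / p + 1 / q = 1 / 2) : ∃ C : ℝ, 0 < C ∧ ∀ g : E2 → ℂ,
    StronglyMeasurable g → Integrable g → ∀ ξ : ℝ, ξ ≠ 0 →
    ∫⁻ t, (∫⁻ y, ‖kpW g (t / ξ) y‖ₑ ^ q) ^ (p / q) ≤ ENNReal.ofReal C * ENNReal.ofReal |ξ| * (∫⁻ η, ‖g η‖ₑ ^ 2) ^ (p / 2) := by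
  obtain ⟨C, hC, H⟩ := kp_str p q hq hp hpq
  refine ⟨C, hC, fun g mg jg ξ hξ => ?_⟩
  have hwm := (kpW_meas g mg).measurable
  have hMm : Measurable fun t => (∫⁻ y, ‖kpW g t y‖ₑ ^ q) ^ (p / q) :=
    (Measurable.lintegral_prod_right' (f := fun z : ℝ × E2 => ‖Function.uncurry (kpW g) z‖ₑ ^ q) (hwm.enorm.pow_const _)).pow_const _
  rw [kp_lint_div _ hMm ξ hξ, mul_comm (ENNReal.ofReal C), mul_assoc]
  exact mul_le_mul' le_rfl (H g mg jg)


theorem kp_absorb2 (X Y : ℝ≥0∞) (r : ℝ) (hr : 1 < r) (hX : X ≠ ∞)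
    (h : X ≤ X ^ ((r - 1) / r) * Y) : X ^ (1 / r) ≤ Y := by
  rcases eq_or_ne X 0 with h0 | h0
  · rw [h0, ENNReal.zero_rpow_of_pos (by positivity)]; exact zero_le
  have e : X ^ (1 / r) = X * (X ^ ((r - 1) / r))⁻¹ := by
    rw [← ENNReal.rpow_neg]
    nth_rw 2 [← ENNReal.rpow_one X]
    rw [← ENNReal.rpow_add _ _ h0 hX]
    congr 1; field_simp; ring
  rw [e, ← div_eq_mul_inv]
  exact ENNReal.div_le_of_le_mul (by rwa [mul_comm] at h)

theorem kp_mink {α β : Type*} [MeasurableSpace α] [MeasurableSpace β] (μ : Measure α) [SigmaFinite μ] (ν : Measure β) [SFinite ν]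
    (H : α → β → ℝ≥0∞) (hH : Measurable (Function.uncurry H)) (r : ℝ) (hr : 1 < r) :
    (∫⁻ y, (∫⁻ ξ, H y ξ ∂ν) ^ r ∂μ) ^ (1 / r) ≤ ∫⁻ ξ, (∫⁻ y, H y ξ ^ r ∂μ) ^ (1 / r) ∂ν := by
  set Y := ∫⁻ ξ, (∫⁻ y, H y ξ ^ r ∂μ) ^ (1 / r) ∂ν with hY
  set S : α → ℝ≥0∞ := fun y => ∫⁻ ξ, H y ξ ∂ν with hS
  have hSm : Measurable S := Measurable.lintegral_prod_right' hH
  set T : ℕ → α → ℝ≥0∞ := fun n => (spanningSets μ n).indicator fun y => min (S y) n with hT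
  have hTm : ∀ n, Measurable (T n) := fun n => (hSm.min measurable_const).indicator (measurableSet_spanningSets μ n)
  have hTS : ∀ n y, T n y ≤ S y := fun n y => by
    simp only [hT]
    refine (Set.indicator_le_self _ _ y).trans (min_le_left _ _)
  have hr0 : 0 < r - 1 := by linarith
  have hconj : Real.HolderConjugate (r / (r - 1)) r := (Real.HolderConjugate.conjExponent hr).symm
  have key : ∀ n, ∫⁻ y, T n y ^ r ∂μ ≤ Y ^ r := by
    intro n
    set X := ∫⁻ y, T n y ^ r ∂μ with hX
    have hXf : X ≠ ∞ := by
      refine ne_top_of_le_ne_top (b := ∫⁻ y in spanningSets μ n, (n : ℝ≥0∞) ^ r ∂μ) ?_ ?_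
      · rw [setLIntegral_const]
        exact ENNReal.mul_ne_top (ENNReal.rpow_ne_top_of_nonneg (by linarith) (by simp)) (measure_spanningSets_lt_top μ n).ne
      · rw [← lintegral_indicator (measurableSet_spanningSets μ n)]
        refine lintegral_mono fun y => ?_
        by_cases hy : y ∈ spanningSets μ n
        · simp only [hT]
          rw [Set.indicator_of_mem hy, Set.indicator_of_mem hy]
          exact ENNReal.rpow_le_rpow (min_le_right _ _) (by linarith)
        · simp only [hT]
          rw [Set.indicator_of_notMem hy, Set.indicator_of_notMem hy, ENNReal.zero_rpow_of_pos (by linarith)]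
    have h1 : X ≤ X ^ ((r - 1) / r) * Y := by
      calc X ≤ ∫⁻ y, ∫⁻ ξ, T n y ^ (r - 1) * H y ξ ∂ν ∂μ := by
            refine lintegral_mono fun y => ?_
            have hHy : Measurable (H y) := hH.comp (g := Function.uncurry H) (f := fun ξ => (y, ξ)) (by fun_prop)
            rw [lintegral_const_mul _ hHy]
            change _ ≤ _ * S y
            calc T n y ^ r = T n y ^ (r - 1) * T n y := by
                  nth_rw 3 [← ENNReal.rpow_one (T n y)]
                  rw [← ENNReal.rpow_add_of_nonneg _ _ hr0.le (by norm_num)]; congr 1; ring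
              _ ≤ _ := mul_le_mul' le_rfl (hTS n y)
        _ = ∫⁻ ξ, ∫⁻ y, T n y ^ (r - 1) * H y ξ ∂μ ∂ν := by
            refine lintegral_lintegral_swap (Measurable.aemeasurable ?_)
            exact (((hTm n).comp measurable_fst).pow_const _).mul hH
        _ ≤ ∫⁻ ξ, X ^ ((r - 1) / r) * (∫⁻ y, H y ξ ^ r ∂μ) ^ (1 / r) ∂ν := by
            refine lintegral_mono fun ξ => ?_
            have hHξ : Measurable fun y => H y ξ := hH.comp (g := Function.uncurry H) (f := fun y => (y, ξ)) (by fun_prop)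
            refine (ENNReal.lintegral_mul_le_Lp_mul_Lq μ hconj ((hTm n).pow_const (r - 1)).aemeasurable hHξ.aemeasurable).trans_eq ?_
            simp_rw [← ENNReal.rpow_mul]
            rw [show (r - 1) * (r / (r - 1)) = r by field_simp, one_div_div]
        _ = _ := by
            rw [lintegral_const_mul' _ _ (ENNReal.rpow_ne_top_of_nonneg (by positivity) hXf)]
    have := ENNReal.rpow_le_rpow (kp_absorb2 X Y r hr hXf h1) (show 0 ≤ r by linarith)
    rwa [← ENNReal.rpow_mul, one_div_mul_cancel (by linarith), ENNReal.rpow_one] at this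
  have lim : ∫⁻ y, S y ^ r ∂μ ≤ Y ^ r := by
    refine le_of_tendsto' (lintegral_tendsto_of_tendsto_of_monotone (f := fun n y => T n y ^ r) (fun n => ((hTm n).pow_const _).aemeasurable) ?_ ?_) key
    · refine Eventually.of_forall fun y n m hnm => ?_
      refine ENNReal.rpow_le_rpow ?_ (by linarith)
      simp only [hT]
      refine (Set.indicator_le_indicator_of_subset (monotone_spanningSets μ hnm) (fun _ => zero_le) y).trans ?_
      refine Set.indicator_le_indicator ?_
      exact min_le_min le_rfl (by exact_mod_cast hnm)
    · refine Eventually.of_forall fun y => ?_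
      refine (ENNReal.continuous_rpow_const.tendsto _).comp ?_
      have h2 : Tendsto (fun n : ℕ => min (S y) (n : ℝ≥0∞)) atTop (nhds (min (S y) ∞)) :=
        tendsto_const_nhds.min ENNReal.tendsto_nat_nhds_top
      rw [min_eq_left le_top] at h2
      refine h2.congr' ?_
      filter_upwards [eventually_ge_atTop (spanningSetsIndex μ y)] with n hn
      simp only [hT]
      rw [Set.indicator_of_mem (monotone_spanningSets μ hn (mem_spanningSetsIndex μ y))]
  have := ENNReal.rpow_le_rpow lim (show 0 ≤ 1 / r by positivity)
  rwa [← ENNReal.rpow_mul, mul_one_div_cancel (by linarith), ENNReal.rpow_one] at this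

theorem kp_mink2 {α β γ : Type*} [MeasurableSpace α] [MeasurableSpace β] [MeasurableSpace γ] (μ : Measure α) [SigmaFinite μ] (τ : Measure γ) [SigmaFinite τ]
    (ν : Measure β) [SFinite ν]
    (H : γ → α → β → ℝ≥0∞) (hH : Measurable fun z : γ × α × β => H z.1 z.2.1 z.2.2) (a b : ℝ) (ha : 1 < a) (hb : 1 < b) :
    (∫⁻ t, (∫⁻ y, (∫⁻ ξ, H t y ξ ∂ν) ^ a ∂μ) ^ (b / a) ∂τ) ^ (1 / b) ≤ ∫⁻ ξ, (∫⁻ t, (∫⁻ y, H t y ξ ^ a ∂μ) ^ (b / a) ∂τ) ^ (1 / b) ∂ν := by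
  have e : ∀ x : ℝ≥0∞, x ^ (b / a) = (x ^ (1 / a)) ^ b := fun x => by
    rw [← ENNReal.rpow_mul]; congr 1; ring
  simp_rw [e]
  refine le_trans ?_ (kp_mink τ ν (fun t ξ => (∫⁻ y, H t y ξ ^ a ∂μ) ^ (1 / a)) ?_ b hb)
  · refine ENNReal.rpow_le_rpow (lintegral_mono fun t => ?_) (by positivity)
    refine ENNReal.rpow_le_rpow ?_ (by linarith)
    refine kp_mink μ ν (H t) ?_ a ha
    exact hH.comp (g := fun z : γ × α × β => H z.1 z.2.1 z.2.2) (f := fun z : α × β => (t, z.1, z.2)) (by fun_prop)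
  · refine Measurable.pow_const ?_ _
    refine Measurable.lintegral_prod_right' (f := fun w : (γ × β) × α => H w.1.1 w.2 w.1.2 ^ a) ?_
    exact (hH.comp (f := fun w : (γ × β) × α => (w.1.1, w.2, w.1.2)) (by fun_prop)).pow_const _


theorem kpW_meas3 (U : ℝ → E2 → ℂ) (hU : StronglyMeasurable (Function.uncurry U)) :
    StronglyMeasurable (fun z : ℝ × E2 × ℝ => kpW (U z.2.2) (z.1 / z.2.2) z.2.1) := by
  have h := kpFT_meas2 (S := ℝ × ℝ) (fun (w : ℝ × ℝ) (η : E2) => Complex.exp (Complex.I * ((-w.2 * ‖η‖ ^ 2 : ℝ) : ℂ)) * U w.1 η) ?_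
  · exact h.comp_measurable (g := fun z : ℝ × E2 × ℝ => ((z.2.2, z.1 / z.2.2), z.2.1)) (by fun_prop)
  · exact StronglyMeasurable.mul (Continuous.stronglyMeasurable (by fun_prop))
      (hU.comp_measurable (g := fun z : (ℝ × ℝ) × E2 => (z.1.1, z.2)) (by fun_prop))

def kpu (U : ℝ → E2 → ℂ) (t x : ℝ) (y : E2) : ℂ :=
  kpFT (fun ξ : ℝ => Complex.exp (Complex.I * ((t * ξ ^ 3 : ℝ) : ℂ)) * kpW (U ξ) (t / ξ) y) x

theorem kpu_aux (U : ℝ → E2 → ℂ) (hU : StronglyMeasurable (Function.uncurry U)) (hI : Integrable (Function.uncurry U) (volume.prod volume)) (t : ℝ) (y : E2) :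
    StronglyMeasurable (fun ξ : ℝ => Complex.exp (Complex.I * ((t * ξ ^ 3 : ℝ) : ℂ)) * kpW (U ξ) (t / ξ) y) ∧
    Integrable (fun ξ : ℝ => Complex.exp (Complex.I * ((t * ξ ^ 3 : ℝ) : ℂ)) * kpW (U ξ) (t / ξ) y) := by
  have h : StronglyMeasurable (fun ξ : ℝ => Complex.exp (Complex.I * ((t * ξ ^ 3 : ℝ) : ℂ)) * kpW (U ξ) (t / ξ) y) :=
    StronglyMeasurable.mul (Continuous.stronglyMeasurable (by fun_prop))
      ((kpW_meas3 U hU).comp_measurable (g := fun ξ : ℝ => (t, y, ξ)) (by fun_prop))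
  refine ⟨h, hI.integral_norm_prod_left.mono' h.aestronglyMeasurable (Eventually.of_forall fun ξ => ?_)⟩
  rw [norm_mul, kp_norm_expI, one_mul]
  exact kpW_le _ _ _

theorem kp_core (p q : ℝ) (hq : 2 < q) (hp : 2 < p) (hpq : 1 / p + 1 / q = 1 / 2) : ∃ C : ℝ, 0 < C ∧ ∀ U : ℝ → E2 → ℂ,
    StronglyMeasurable (Function.uncurry U) → Integrable (Function.uncurry U) (volume.prod volume) → (∀ ξ, Integrable (U ξ)) →
    (∫⁻ t, (∫⁻ y, ∫⁻ x, ‖kpu U t x y‖ₑ ^ q) ^ (p / q)) ^ (2 / p) ≤ ENNReal.ofReal C * ∫⁻ ξ : ℝ, ENNReal.ofReal (|ξ| ^ (4 / p)) * ∫⁻ η, ‖U ξ η‖ₑ ^ 2 := by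
  obtain ⟨C₁, hC₁, H1⟩ := kp_sobolev p q hq hp hpq
  obtain ⟨C₂, hC₂, H2⟩ := kp_str_scaled p q hq hp hpq
  refine ⟨C₁ ^ (2 / q) * C₂ ^ (2 / p), by positivity, fun U hU hI hIξ => ?_⟩
  have hUξ : ∀ ξ, StronglyMeasurable (U ξ) := fun ξ => hU.comp_measurable (g := fun y => (ξ, y)) (by fun_prop)
  have hq0 : 0 < q := by linarith
  have hp0 : 0 < p := by linarith
  set H : ℝ → E2 → ℝ → ℝ≥0∞ := fun t y ξ => ‖kpW (U ξ) (t / ξ) y‖ₑ ^ 2 * ENNReal.ofReal (|ξ| ^ (2 / p)) with hH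
  have hHm : Measurable fun z : ℝ × E2 × ℝ => H z.1 z.2.1 z.2.2 := by
    refine Measurable.mul ((kpW_meas3 U hU).measurable.enorm.pow_const _) (by fun_prop)
  have hC1f : ENNReal.ofReal (C₁ ^ (2 / q)) = ((ENNReal.ofReal C₁) ^ (p / q)) ^ (2 / p) := by
    rw [← ENNReal.rpow_mul, ← ENNReal.ofReal_rpow_of_pos hC₁]; congr 1; field_simp
  calc _ ≤ (∫⁻ t, (∫⁻ y, ENNReal.ofReal C₁ * (∫⁻ ξ, H t y ξ) ^ (q / 2)) ^ (p / q)) ^ (2 / p) := by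
        refine ENNReal.rpow_le_rpow (lintegral_mono fun t => ?_) (by positivity)
        refine ENNReal.rpow_le_rpow (lintegral_mono fun y => ?_) (by positivity)
        have ha := kpu_aux U hU hI t y
        refine (H1 _ ha.1 ha.2).trans_eq ?_
        congr 2
        refine lintegral_congr fun ξ => ?_
        rw [enorm_mul, ← ofReal_norm (Complex.exp _), kp_norm_expI, ENNReal.ofReal_one, one_mul]
    _ = ENNReal.ofReal (C₁ ^ (2 / q)) * (∫⁻ t, (∫⁻ y, (∫⁻ ξ, H t y ξ) ^ (q / 2)) ^ (p / q)) ^ (2 / p) := by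
        rw [hC1f, ← ENNReal.mul_rpow_of_nonneg _ _ (by positivity), ← lintegral_const_mul' _ _ (ENNReal.rpow_ne_top_of_nonneg (by positivity) (by simp))]
        congr 1
        refine lintegral_congr fun t => ?_
        rw [lintegral_const_mul' _ _ (by simp), ENNReal.mul_rpow_of_nonneg _ _ (by positivity)]
    _ ≤ ENNReal.ofReal (C₁ ^ (2 / q)) * ∫⁻ ξ, (∫⁻ t, (∫⁻ y, H t y ξ ^ (q / 2)) ^ (p / q)) ^ (2 / p) := by
        refine mul_le_mul' le_rfl ?_
        have := kp_mink2 (volume : Measure E2) (volume : Measure ℝ) (volume : Measure ℝ) H hHm (q / 2) (p / 2) (by linarith) (by linarith)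
        rwa [show p / 2 / (q / 2) = p / q by field_simp, one_div_div] at this
    _ ≤ ENNReal.ofReal (C₁ ^ (2 / q)) * ∫⁻ ξ, ENNReal.ofReal (C₂ ^ (2 / p)) * (ENNReal.ofReal (|ξ| ^ (4 / p)) * ∫⁻ η, ‖U ξ η‖ₑ ^ 2) := by
        refine mul_le_mul' le_rfl (lintegral_mono_ae ?_)
        have : ∀ᵐ ξ : ℝ, ξ ≠ 0 := by simp [ae_iff]
        filter_upwards [this] with ξ hξ
        have hξ' : 0 < |ξ| := abs_pos.2 hξ
        have e1 : ∀ t, (∫⁻ y, H t y ξ ^ (q / 2)) ^ (p / q) = ENNReal.ofReal |ξ| * (∫⁻ y, ‖kpW (U ξ) (t / ξ) y‖ₑ ^ q) ^ (p / q) := by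
          intro t
          have : ∀ y, H t y ξ ^ (q / 2) = ENNReal.ofReal (|ξ| ^ (q / p)) * ‖kpW (U ξ) (t / ξ) y‖ₑ ^ q := by
            intro y
            simp only [hH]
            rw [ENNReal.mul_rpow_of_nonneg _ _ (by positivity), mul_comm, ENNReal.ofReal_rpow_of_pos (by positivity), ← Real.rpow_mul hξ'.le,
              ← ENNReal.rpow_ofNat, ← ENNReal.rpow_mul]
            congr 3 <;> field_simp
          simp_rw [this]
          rw [lintegral_const_mul' _ _ (by simp), ENNReal.mul_rpow_of_nonneg _ _ (by positivity), ENNReal.ofReal_rpow_of_pos (by positivity), ← Real.rpow_mul hξ'.le,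
            show q / p * (p / q) = 1 by field_simp, Real.rpow_one]
        simp_rw [e1]
        rw [lintegral_const_mul' _ _ (by simp)]
        refine (ENNReal.rpow_le_rpow (mul_le_mul' le_rfl (H2 (U ξ) (hUξ ξ) (hIξ ξ) ξ hξ)) (by positivity)).trans_eq ?_
        rw [ENNReal.mul_rpow_of_nonneg _ _ (by positivity), ENNReal.mul_rpow_of_nonneg _ _ (by positivity), ENNReal.mul_rpow_of_nonneg _ _ (by positivity),
          ← ENNReal.rpow_mul, show p / 2 * (2 / p) = 1 by field_simp, ENNReal.rpow_one, ENNReal.ofReal_rpow_of_pos hC₂, ENNReal.ofReal_rpow_of_pos hξ',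
          show 4 / p = 2 / p + 2 / p by ring, Real.rpow_add hξ', ENNReal.ofReal_mul (by positivity)]
        ring
    _ = _ := by
        rw [lintegral_const_mul' _ _ (by simp), ENNReal.ofReal_mul (by positivity), mul_assoc]


theorem kp_core2 (U : ℝ → E2 → ℂ) (hU : StronglyMeasurable (Function.uncurry U)) (hI : Integrable (Function.uncurry U) (volume.prod volume)) (hIξ : ∀ ξ, Integrable (U ξ)) (t : ℝ) :
    ∫⁻ y, ∫⁻ x, ‖kpu U t x y‖ₑ ^ 2 ≤ ENNReal.ofReal (2 * (2 * Real.pi) ^ (Module.finrank ℝ ℝ)) * (ENNReal.ofReal (2 * (2 * Real.pi) ^ (Module.finrank ℝ E2)) * ∫⁻ ξ : ℝ, ∫⁻ η, ‖U ξ η‖ₑ ^ 2) := by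
  have hUξ : ∀ ξ, StronglyMeasurable (U ξ) := fun ξ => hU.comp_measurable (g := fun y => (ξ, y)) (by fun_prop)
  calc _ ≤ ∫⁻ y, ENNReal.ofReal (2 * (2 * Real.pi) ^ (Module.finrank ℝ ℝ)) * ∫⁻ ξ : ℝ, ‖kpW (U ξ) (t / ξ) y‖ₑ ^ 2 := by
        refine lintegral_mono fun y => ?_
        have ha := kpu_aux U hU hI t y
        refine (kp_plancherel _ ha.1 ha.2).trans_eq ?_
        congr 1
        refine lintegral_congr fun ξ => ?_
        rw [enorm_mul, ← ofReal_norm (Complex.exp _), kp_norm_expI, ENNReal.ofReal_one, one_mul]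
    _ = ENNReal.ofReal (2 * (2 * Real.pi) ^ (Module.finrank ℝ ℝ)) * ∫⁻ ξ : ℝ, ∫⁻ y, ‖kpW (U ξ) (t / ξ) y‖ₑ ^ 2 := by
        rw [lintegral_const_mul' _ _ ENNReal.ofReal_ne_top, lintegral_lintegral_swap]
        refine Measurable.aemeasurable ?_
        have := ((kpW_meas3 U hU).comp_measurable (g := fun z : E2 × ℝ => (t, z.1, z.2)) (by fun_prop)).measurable.enorm.pow_const 2
        exact this
    _ ≤ _ := by
        refine mul_le_mul' le_rfl ?_
        rw [← lintegral_const_mul' _ _ ENNReal.ofReal_ne_top]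
        refine lintegral_mono fun ξ => ?_
        have hb := kp_eg (U ξ) (hUξ ξ) (hIξ ξ) (t / ξ)
        refine (kp_plancherel _ hb.1 hb.2).trans_eq ?_
        congr 1
        refine lintegral_congr fun η => ?_
        rw [enorm_mul, ← ofReal_norm (Complex.exp _), kp_norm_expI, ENNReal.ofReal_one, one_mul]

open FourierTransform in
theorem kp_ft_schwartz (u : SchwartzMap (ℝ × E2) ℂ) : ∃ G : SchwartzMap (ℝ × E2) ℂ, ∀ ζ, ft (fun w => u w) ζ = G ζ := by
  let e := WithLp.prodContinuousLinearEquiv 2 ℝ ℝ E2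
  let F : SchwartzMap (WithLp 2 (ℝ × E2)) ℂ := SchwartzMap.compCLMOfContinuousLinearEquiv ℂ e u
  let s : (ℝ × E2) ≃L[ℝ] (ℝ × E2) := ContinuousLinearEquiv.smulLeft (Units.mk0 ((2 * Real.pi)⁻¹ : ℝ) (by positivity))
  refine ⟨SchwartzMap.compCLMOfContinuousLinearEquiv ℂ (s.trans e.symm) (𝓕 F), fun ζ => ?_⟩
  have : (SchwartzMap.compCLMOfContinuousLinearEquiv ℂ (s.trans e.symm) (𝓕 F)) ζ = 𝓕 (F : WithLp 2 (ℝ × E2) → ℂ) (WithLp.toLp 2 ((2 * Real.pi)⁻¹ • ζ)) := rfl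
  rw [this, Real.fourier_eq', ft]
  have hv := (WithLp.volume_preserving_ofLp ℝ E2)
  rw [← hv.integral_comp (WithLp.prodContinuousLinearEquiv 2 ℝ ℝ E2).toHomeomorph.measurableEmbedding]
  congr 1
  ext z
  rw [smul_eq_mul]
  have h2 : F z = u (WithLp.ofLp z) := rfl
  have h3 : -2 * Real.pi * inner ℝ z (WithLp.toLp 2 ((2 * Real.pi)⁻¹ • ζ)) = - (z.ofLp.1 * ζ.1 + inner ℝ z.ofLp.2 ζ.2) := by
    rw [WithLp.prod_inner_apply]
    simp only [Prod.smul_fst, Prod.smul_snd, inner_smul_right, smul_eq_mul, real_inner_eq_re_inner, RCLike.inner_apply, conj_trivial]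
    have := Real.pi_ne_zero
    simp
    field_simp
    ring
  rw [h2, h3]
  congr 2
  push_cast
  ring

theorem kp_reduce (u : SchwartzMap (ℝ × E2) ℂ) : ∃ U : ℝ → E2 → ℂ,
    StronglyMeasurable (Function.uncurry U) ∧ Integrable (Function.uncurry U) (volume.prod volume) ∧ (∀ ξ, Integrable (U ξ)) ∧
    (∀ᵐ ζ : ℝ × E2, ft (fun w => u w) ζ = U ζ.1 ζ.2) := by
  obtain ⟨G, hG⟩ := kp_ft_schwartz u
  have hGi : Integrable (fun ζ => G ζ) (volume.prod volume) := by
    haveI : ((volume : Measure ℝ).prod (volume : Measure E2)).IsAddHaarMeasure := inferInstance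
    exact G.integrable
  have hGm : StronglyMeasurable (fun ζ => G ζ) := G.continuous.stronglyMeasurable
  set N : ℝ → ℝ≥0∞ := fun ξ => ∫⁻ η, ‖G (ξ, η)‖ₑ with hN
  have hNm : Measurable N := Measurable.lintegral_prod_right' (f := fun z : ℝ × E2 => ‖G z‖ₑ) hGm.measurable.enorm
  have hs : MeasurableSet {z : ℝ × E2 | N z.1 < ∞} := measurableSet_lt (hNm.comp measurable_fst) measurable_const
  have hUe : (Function.uncurry fun ξ η => if N ξ < ∞ then G (ξ, η) else 0) = {z : ℝ × E2 | N z.1 < ∞}.indicator (fun ζ => G ζ) := by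
    ext z
    by_cases h : N z.1 < ∞ <;> simp [Function.uncurry, Set.indicator, h]
  refine ⟨fun ξ η => if N ξ < ∞ then G (ξ, η) else 0, ?_, ?_, ?_, ?_⟩
  · rw [hUe]; exact hGm.indicator hs
  · rw [hUe]; exact hGi.indicator hs
  · intro ξ
    by_cases h : N ξ < ∞
    · simp only [h, if_true]
      exact ⟨(hGm.comp_measurable (g := fun y => (ξ, y)) (by fun_prop)).aestronglyMeasurable, h⟩
    · simp [h]
  · have h1 : ∀ᵐ ξ : ℝ, N ξ < ∞ := by
      filter_upwards [hGi.prod_right_ae] with ξ hξ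
      exact hξ.2
    have h2 : ∀ᵐ ζ : ℝ × E2, N ζ.1 < ∞ := by
      rw [Measure.volume_eq_prod]
      exact Measure.quasiMeasurePreserving_fst.ae h1
    filter_upwards [h2] with ζ hζ
    rw [hG, if_pos hζ]

theorem kp_evol_eq (u : SchwartzMap (ℝ × E2) ℂ) (U : ℝ → E2 → ℂ) (hU : StronglyMeasurable (Function.uncurry U)) (hI : Integrable (Function.uncurry U) (volume.prod volume))
    (he : ∀ᵐ ζ : ℝ × E2, ft (fun w => u w) ζ = U ζ.1 ζ.2) (t : ℝ) (z : ℝ × E2) : kpEvol u t z = kpu U t z.1 z.2 := by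
  have h1 : kpEvol u t z = ∫ ζ : ℝ × E2, Complex.exp (Complex.I * ((t * omega ζ + z.1 * ζ.1 + inner ℝ z.2 ζ.2 : ℝ) : ℂ)) * U ζ.1 ζ.2 := by
    refine integral_congr_ae ?_
    filter_upwards [he] with ζ hζ
    rw [hζ]
  have hm : Measurable (fun ζ : ℝ × E2 => t * omega ζ + z.1 * ζ.1 + inner ℝ z.2 ζ.2) := by
    unfold omega; fun_prop
  have hi : Integrable (fun ζ : ℝ × E2 => Complex.exp (Complex.I * ((t * omega ζ + z.1 * ζ.1 + inner ℝ z.2 ζ.2 : ℝ) : ℂ)) * U ζ.1 ζ.2) (volume.prod volume) := by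
    refine hI.norm.mono' ?_ (Eventually.of_forall fun ζ => ?_)
    · refine AEStronglyMeasurable.mul (Measurable.aestronglyMeasurable ?_) hU.aestronglyMeasurable
      exact Complex.measurable_exp.comp (measurable_const.mul (Complex.measurable_ofReal.comp hm))
    · rw [norm_mul, kp_norm_expI, one_mul]; rfl
  rw [h1, Measure.volume_eq_prod, integral_prod _ hi]
  unfold kpu kpW kpFT
  refine integral_congr_ae (Eventually.of_forall fun ξ => ?_)
  dsimp only
  rw [← integral_const_mul, ← integral_const_mul]
  refine integral_congr_ae (Eventually.of_forall fun η => ?_)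
  dsimp only
  rw [← mul_assoc, ← mul_assoc, ← mul_assoc, ← Complex.exp_add, ← Complex.exp_add, ← Complex.exp_add]
  congr 2
  have : (inner ℝ z.1 ξ : ℝ) = z.1 * ξ := by simp [mul_comm]
  rw [this]
  simp only [omega]
  push_cast
  ring

theorem kp_lhs (u : SchwartzMap (ℝ × E2) ℂ) (U : ℝ → E2 → ℂ) (hU : StronglyMeasurable (Function.uncurry U)) (hI : Integrable (Function.uncurry U) (volume.prod volume))
    (he : ∀ᵐ ζ : ℝ × E2, ft (fun w => u w) ζ = U ζ.1 ζ.2) (t : ℝ) (q : ℝ≥0∞) (hq0 : q ≠ 0) (hq : q ≠ ∞) :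
    eLpNorm (kpEvol u t) q volume = (∫⁻ y, ∫⁻ x, ‖kpu U t x y‖ₑ ^ q.toReal) ^ (1 / q.toReal) := by
  have hm : StronglyMeasurable (fun z : ℝ × E2 => ∫ ζ : ℝ × E2, Complex.exp (Complex.I * ((t * omega ζ + z.1 * ζ.1 + inner ℝ z.2 ζ.2 : ℝ) : ℂ)) * U ζ.1 ζ.2) := by
    refine StronglyMeasurable.integral_prod_right' (f := fun w : (ℝ × E2) × (ℝ × E2) => Complex.exp (Complex.I * ((t * omega w.2 + w.1.1 * w.2.1 + inner ℝ w.1.2 w.2.2 : ℝ) : ℂ)) * U w.2.1 w.2.2) ?_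
    refine StronglyMeasurable.mul (Measurable.stronglyMeasurable ?_) (hU.comp_measurable (g := fun w : (ℝ × E2) × (ℝ × E2) => w.2) (by fun_prop))
    refine Complex.measurable_exp.comp (measurable_const.mul (Complex.measurable_ofReal.comp ?_))
    unfold omega; fun_prop
  have h1 : (fun z : ℝ × E2 => ∫ ζ : ℝ × E2, Complex.exp (Complex.I * ((t * omega ζ + z.1 * ζ.1 + inner ℝ z.2 ζ.2 : ℝ) : ℂ)) * U ζ.1 ζ.2) = fun z => kpu U t z.1 z.2 := by
    ext z
    rw [← kp_evol_eq u U hU hI he]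
    refine integral_congr_ae ?_
    filter_upwards [he] with ζ hζ
    rw [hζ]
  rw [h1] at hm
  rw [eLpNorm_eq_lintegral_rpow_enorm_toReal hq0 hq]
  congr 1
  simp_rw [kp_evol_eq u U hU hI he]
  rw [Measure.volume_eq_prod, lintegral_prod_symm _ (hm.measurable.enorm.pow_const _).aemeasurable]

theorem kp_rhs (u : SchwartzMap (ℝ × E2) ℂ) (U : ℝ → E2 → ℂ) (hU : StronglyMeasurable (Function.uncurry U))
    (he : ∀ᵐ ζ : ℝ × E2, ft (fun w => u w) ζ = U ζ.1 ζ.2) (p : ℝ) :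
    eLpNorm (fun ζ : ℝ × E2 => ((|ζ.1| ^ (2 / p) : ℝ) : ℂ) * ft (fun w => u w) ζ) 2 volume =
      (∫⁻ ξ : ℝ, ENNReal.ofReal (|ξ| ^ (4 / p)) * ∫⁻ η, ‖U ξ η‖ₑ ^ 2) ^ (1 / 2 : ℝ) := by
  rw [eLpNorm_eq_lintegral_rpow_enorm_toReal (by simp) (by simp)]
  simp only [ENNReal.toReal_ofNat]
  congr 1
  have h1 : ∫⁻ ζ : ℝ × E2, ‖((|ζ.1| ^ (2 / p) : ℝ) : ℂ) * ft (fun w => u w) ζ‖ₑ ^ (2 : ℝ) = ∫⁻ ζ : ℝ × E2, ENNReal.ofReal (|ζ.1| ^ (4 / p)) * ‖U ζ.1 ζ.2‖ₑ ^ 2 := by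
    refine lintegral_congr_ae ?_
    filter_upwards [he] with ζ hζ
    rw [hζ, ENNReal.rpow_ofNat, enorm_mul, mul_pow, ← ofReal_norm ((_ : ℝ) : ℂ), Complex.norm_of_nonneg (by positivity), ← ENNReal.ofReal_pow (by positivity),
      ← Real.rpow_mul_natCast (abs_nonneg _)]
    have h4 : 2 / p * ((2 : ℕ) : ℝ) = 4 / p := by push_cast; ring
    rw [h4]
  have h2 : Measurable fun ζ : ℝ × E2 => ENNReal.ofReal (|ζ.1| ^ (4 / p)) * ‖U ζ.1 ζ.2‖ₑ ^ 2 :=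
    Measurable.mul (by fun_prop) (hU.measurable.enorm.pow_const 2)
  rw [h1, Measure.volume_eq_prod, lintegral_prod _ h2.aemeasurable]
  refine lintegral_congr fun ξ => ?_
  dsimp only
  rw [lintegral_const_mul' _ _ ENNReal.ofReal_ne_top]

theorem strichartz_kp3d' (p q : ℝ≥0∞) (hq2 : 2 ≤ q) (hq : q ≠ ∞)
    (hpq : 1 / p + 1 / q = 1 / 2) :
    ∃ C : ℝ, 0 < C ∧ ∀ u₀ : SchwartzMap (ℝ × E2) ℂ,
      mixedNorm p q (kpEvol u₀) ≤
        ENNReal.ofReal C *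
          eLpNorm (fun ζ : ℝ × E2 =>
            ((|ζ.1| ^ (2 / p.toReal) : ℝ) : ℂ) * ft (fun w => u₀ w) ζ) 2 volume := by
  have hq0 : q ≠ 0 := (lt_of_lt_of_le (by simp) hq2).ne'
  have hqr : q = ENNReal.ofReal q.toReal := (ENNReal.ofReal_toReal hq).symm
  have hq2r : 2 ≤ q.toReal := by
    have := (ENNReal.toReal_le_toReal (by simp) hq).2 hq2
    simpa using this
  by_cases hp : p = ∞
  · subst hp
    have hqe : q = 2 := by
      simp at hpq
      exact hpq
    subst hqe
    set K : ℝ := (2 * (2 * Real.pi) ^ (Module.finrank ℝ ℝ)) * (2 * (2 * Real.pi) ^ (Module.finrank ℝ E2)) with hK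
    have hK0 : 0 < K := by positivity
    refine ⟨K ^ (1 / 2 : ℝ), by positivity, fun u => ?_⟩
    obtain ⟨U, hU, hI, hIξ, he⟩ := kp_reduce u
    rw [kp_rhs u U hU he]
    simp only [mixedNorm, lpENN, if_true]
    refine essSup_le_of_ae_le _ (Eventually.of_forall fun t => ?_)
    dsimp only
    rw [kp_lhs u U hU hI he t 2 (by simp) (by simp), ← ENNReal.ofReal_rpow_of_pos hK0, ← ENNReal.mul_rpow_of_nonneg _ _ (by positivity)]
    simp only [ENNReal.toReal_ofNat]
    refine ENNReal.rpow_le_rpow ?_ (by positivity)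
    have := kp_core2 U hU hI hIξ t
    rw [← mul_assoc, ← ENNReal.ofReal_mul (by positivity), ← hK] at this
    simpa using this
  · have hp0 : p ≠ 0 := by
      rintro rfl
      rw [ENNReal.div_zero one_ne_zero, top_add] at hpq
      have h5 : (1 / 2 : ℝ≥0∞) ≠ ∞ := ENNReal.div_ne_top (by simp) (by simp)
      exact h5 hpq.symm
    have hpq' : 1 / p.toReal + 1 / q.toReal = 1 / 2 := by
      have := congrArg ENNReal.toReal hpq
      rw [ENNReal.toReal_add (by simp [hp0]) (by simp [hq0])] at this
      simpa using this
    have hpp : 0 < p.toReal := ENNReal.toReal_pos hp0 hp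
    have hqp : 0 < q.toReal := by linarith
    have hq3 : 2 < q.toReal := by
      have h : 0 < 1 / p.toReal := by positivity
      have h' : 1 / q.toReal < 1 / 2 := by linarith
      exact lt_of_one_div_lt_one_div hqp h'
    have hp3 : 2 < p.toReal := by
      have h : 0 < 1 / q.toReal := by positivity
      have h' : 1 / p.toReal < 1 / 2 := by linarith
      exact lt_of_one_div_lt_one_div hpp h'
    obtain ⟨K, hK0, H⟩ := kp_core p.toReal q.toReal hq3 hp3 hpq'
    refine ⟨K ^ (1 / 2 : ℝ), by positivity, fun u => ?_⟩
    obtain ⟨U, hU, hI, hIξ, he⟩ := kp_reduce u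
    rw [kp_rhs u U hU he]
    simp only [mixedNorm, lpENN, if_neg hp]
    simp_rw [kp_lhs u U hU hI he _ q hq0 hq]
    rw [← ENNReal.ofReal_rpow_of_pos hK0, ← ENNReal.mul_rpow_of_nonneg _ _ (by positivity)]
    refine le_trans (le_of_eq ?_) (ENNReal.rpow_le_rpow (H U hU hI hIξ) (by positivity : (0 : ℝ) ≤ 1 / 2))
    rw [← ENNReal.rpow_mul]
    simp_rw [← ENNReal.rpow_mul]
    congr 1
    · congr 1
      ext t
      congr 1
      field_simp
    · field_simp
end
end

section
/- There exists a constant C > 0 such that for every real t ≠ 0 and every a ∈ ℝ, the improper oscillatory integral L(a,t) = lim_{R→∞} ∫_{−R}^{R} sgn(ξ) |ξ|^{1/2} exp( i( a ξ + t ξ³ ) ) dξ exists in ℂ and satisfies |L(a,t)| ≤ C |t|^{−1/2}. -/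
noncomputable section

open MeasureTheory Filter
open scoped Topology

lemma avc_ibp {x y : ℝ} (hxy : x ≤ y) (G G' H H' φ φ' : ℝ → ℝ)
    (hG : ∀ ξ ∈ Set.Icc x y, HasDerivAt G (G' ξ) ξ)
    (hH : ∀ ξ ∈ Set.Icc x y, HasDerivAt H (H' ξ) ξ)
    (hφ : ∀ ξ, HasDerivAt φ (φ' ξ) ξ)
    (cG : ContinuousOn G' (Set.Icc x y)) (cH : ContinuousOn H' (Set.Icc x y))
    (cφ : Continuous φ')
    (hle : ∀ ξ ∈ Set.Icc x y, |G' ξ| ≤ H' ξ) :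
    |∫ ξ in x..y, G ξ * (φ' ξ * Real.sin (φ ξ))| ≤ |G x| + |G y| + (H y - H x) := by
  have cφ0 : Continuous φ := continuous_iff_continuousAt.2 fun z => (hφ z).continuousAt
  have hu : Set.uIcc x y = Set.Icc x y := Set.uIcc_of_le hxy
  have hcos : ∀ ξ ∈ Set.uIcc x y, HasDerivAt (fun z => -Real.cos (φ z))
      (φ' ξ * Real.sin (φ ξ)) ξ := by
    intro ξ _
    have := ((hφ ξ).cos).neg
    exact this.congr_deriv (by ring)
  have iG : IntervalIntegrable G' volume x y := (hu ▸ cG).intervalIntegrable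
  have iH : IntervalIntegrable H' volume x y := (hu ▸ cH).intervalIntegrable
  have e := intervalIntegral.integral_mul_deriv_eq_deriv_mul (u := G) (u' := G')
    (v := fun z => -Real.cos (φ z)) (v' := fun ξ => φ' ξ * Real.sin (φ ξ))
    (fun ξ h => hG ξ (hu ▸ h)) hcos iG
    ((cφ.mul (Real.continuous_sin.comp cφ0)).intervalIntegrable x y)
  have eH : ∫ ξ in x..y, H' ξ = H y - H x :=
    intervalIntegral.integral_eq_sub_of_hasDerivAt (fun ξ h => hH ξ (hu ▸ h)) iH
  have hb : |∫ ξ in x..y, G' ξ * (-Real.cos (φ ξ))| ≤ H y - H x := by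
    rw [← eH, ← Real.norm_eq_abs]
    apply intervalIntegral.norm_integral_le_of_norm_le hxy _ iH
    refine Eventually.of_forall fun ξ hξ => ?_
    have h1 := hle ξ (Set.Ioc_subset_Icc_self hξ)
    rw [Real.norm_eq_abs, abs_mul, abs_neg]
    have := Real.abs_cos_le_one (φ ξ)
    nlinarith [abs_nonneg (G' ξ)]
  rw [e]
  have b1 : |G y * -Real.cos (φ y)| ≤ |G y| := by
    rw [abs_mul, abs_neg]
    nlinarith [Real.abs_cos_le_one (φ y), abs_nonneg (G y)]
  have b2 : |G x * -Real.cos (φ x)| ≤ |G x| := by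
    rw [abs_mul, abs_neg]
    nlinarith [Real.abs_cos_le_one (φ x), abs_nonneg (G x)]
  rw [abs_le] at *
  constructor <;> linarith [b1.1, b1.2, b2.1, b2.2, hb.1, hb.2]

def avcF (a ξ : ℝ) : ℝ := √ξ * Real.sin (a * ξ + ξ ^ 3)

lemma avcF_cont (a : ℝ) : Continuous (avcF a) := by unfold avcF; fun_prop

def avcG (a ξ : ℝ) : ℝ := √ξ / (3 * ξ ^ 2 + a)
def avcG' (a ξ : ℝ) : ℝ :=
  (1 / (2 * √ξ) * (3 * ξ ^ 2 + a) - √ξ * (6 * ξ)) / (3 * ξ ^ 2 + a) ^ 2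

lemma avcG_deriv {a ξ : ℝ} (h : 0 < ξ) (hD : 3 * ξ ^ 2 + a ≠ 0) :
    HasDerivAt (avcG a) (avcG' a ξ) ξ := by
  have h1 := Real.hasDerivAt_sqrt h.ne'
  have h2 : HasDerivAt (fun z : ℝ => 3 * z ^ 2 + a) (6 * ξ) ξ := by
    have := ((hasDerivAt_pow 2 ξ).const_mul 3).add_const a
    exact this.congr_deriv (by norm_num; ring)
  exact h1.div h2 hD

lemma avcG'_eq {a ξ : ℝ} (h : 0 < ξ) :
    avcG' a ξ = (a - 9 * ξ ^ 2) / (2 * √ξ * (3 * ξ ^ 2 + a) ^ 2) := by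
  have hs : 0 < √ξ := Real.sqrt_pos.2 h
  have h2 : √ξ ^ 2 = ξ := Real.sq_sqrt h.le
  unfold avcG'
  by_cases hD : 3 * ξ ^ 2 + a = 0
  · simp [hD]
  field_simp
  rw [h2]; ring

lemma avcG'_cont {a : ℝ} {S : Set ℝ} (h : ∀ ξ ∈ S, 0 < ξ ∧ 3 * ξ ^ 2 + a ≠ 0) :
    ContinuousOn (avcG' a) S := by
  unfold avcG'
  have : ∀ ξ ∈ S, 2 * √ξ ≠ 0 := fun ξ hξ => by
    have := Real.sqrt_pos.2 (h ξ hξ).1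
    positivity
  have h2 : ∀ ξ ∈ S, (3 * ξ ^ 2 + a) ^ 2 ≠ 0 := fun ξ hξ => pow_ne_zero _ (h ξ hξ).2
  apply ContinuousOn.div _ (by fun_prop) h2
  apply ContinuousOn.sub _ (by fun_prop)
  apply ContinuousOn.mul _ (by fun_prop)
  exact ContinuousOn.div (by fun_prop) (by fun_prop) this

lemma avc_gen {a x y : ℝ} (hxy : x ≤ y) (h : ∀ ξ ∈ Set.Icc x y, 0 < ξ ∧ 3 * ξ ^ 2 + a ≠ 0)
    (H H' : ℝ → ℝ)
    (hH : ∀ ξ ∈ Set.Icc x y, HasDerivAt H (H' ξ) ξ)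
    (cH : ContinuousOn H' (Set.Icc x y))
    (hle : ∀ ξ ∈ Set.Icc x y, |avcG' a ξ| ≤ H' ξ) :
    |∫ ξ in x..y, avcF a ξ| ≤ |avcG a x| + |avcG a y| + (H y - H x) := by
  have key := avc_ibp hxy (avcG a) (avcG' a) H H' (fun ξ => a * ξ + ξ ^ 3)
    (fun ξ => 3 * ξ ^ 2 + a) (fun ξ hξ => avcG_deriv (h ξ hξ).1 (h ξ hξ).2) hH
    (fun ξ => by
      have := ((hasDerivAt_id ξ).const_mul a).add (hasDerivAt_pow 3 ξ)
      exact this.congr_deriv (by norm_num; ring)) (avcG'_cont h) cH (by fun_prop) hle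
  convert key using 2
  apply intervalIntegral.integral_congr
  intro ξ hξ
  rw [Set.uIcc_of_le hxy] at hξ
  have := (h ξ hξ).2
  simp only [avcF, avcG]
  rw [← mul_assoc, div_mul_cancel₀ _ this]

lemma avc_tail {a x y : ℝ} (hx : 4 ≤ x) (ha : -a ≤ x ^ 2) (hxy : x ≤ y) :
    |∫ ξ in x..y, avcF a ξ| ≤ 2 / x := by
  have hD : ∀ ξ, x ≤ ξ → 2 * ξ ^ 2 ≤ 3 * ξ ^ 2 + a := fun ξ h => by nlinarith
  have hs : ∀ ξ, x ≤ ξ → 2 ≤ √ξ := fun ξ h => Real.le_sqrt_of_sq_le (by linarith)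
  have hG : ∀ ξ, x ≤ ξ → |avcG a ξ| ≤ 1 / ξ := by
    intro ξ h
    have h1 := hD ξ h
    have h2 := hs ξ h
    have h3 : √ξ ^ 2 = ξ := Real.sq_sqrt (by linarith)
    have h0 : 0 < ξ := by linarith
    have h4 : 0 < ξ ^ 2 := by positivity
    have h5 : 0 < 3 * ξ ^ 2 + a := by linarith
    unfold avcG
    rw [abs_of_nonneg (by positivity), div_le_div_iff₀ h5 h0]
    have : √ξ ≤ ξ := by nlinarith
    nlinarith
  have key := avc_gen (a := a) hxy (fun ξ hξ => ⟨by linarith [hξ.1], by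
    have := hD ξ hξ.1
    have h0 : 0 < ξ := by linarith [hξ.1]
    have : 0 < ξ ^ 2 := by positivity
    linarith⟩) (fun ξ => -ξ⁻¹) (fun ξ => (ξ ^ 2)⁻¹) (fun ξ hξ => by
      have := (hasDerivAt_inv (x := ξ) (by linarith [hξ.1])).neg
      exact this.congr_deriv (by ring)) (ContinuousOn.inv₀ (by fun_prop) (fun ξ hξ => by
        have h0 : 0 < ξ := by linarith [hξ.1]
        positivity)) (by
    intro ξ hξ
    have h := hξ.1
    have h1 := hD ξ h
    have h2 := hs ξ h
    have h0 : 0 < ξ := by linarith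
    have h4 : 0 < ξ ^ 2 := by positivity
    have h5 : 0 < 3 * ξ ^ 2 + a := by linarith
    rw [avcG'_eq h0, abs_div, abs_of_pos (a := 2 * √ξ * (3 * ξ ^ 2 + a) ^ 2) (by positivity),
      div_le_iff₀ (by positivity), inv_mul_eq_div, le_div_iff₀ h4]
    generalize hd : 3 * ξ ^ 2 + a = D at *
    have e : a - 9 * ξ ^ 2 = D - 12 * ξ ^ 2 := by linarith
    rw [e]
    have k1 : |D - 12 * ξ ^ 2| * ξ ^ 2 ≤ 4 * D ^ 2 := by
      have : |D - 12 * ξ ^ 2| ≤ 8 * D := by rw [abs_le]; constructor <;> nlinarith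
      nlinarith
    nlinarith [sq_nonneg D])
  have g1 := hG x le_rfl
  have g2 := hG y hxy
  simp only [one_div] at g1 g2
  rw [div_eq_mul_inv]
  linarith

lemma avc_mono {a x y : ℝ} (hxy : x ≤ y) (ha : a ≤ 0)
    (h : ∀ ξ ∈ Set.Icc x y, 0 < ξ ∧ 3 * ξ ^ 2 + a ≠ 0) :
    |∫ ξ in x..y, avcF a ξ| ≤ |avcG a x| + |avcG a y| + (avcG a x - avcG a y) := by
  have key := avc_gen hxy h (fun ξ => -avcG a ξ) (fun ξ => -avcG' a ξ)
    (fun ξ hξ => (avcG_deriv (h ξ hξ).1 (h ξ hξ).2).neg) (avcG'_cont h).neg (by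
      intro ξ hξ
      rw [abs_of_nonpos]
      rw [avcG'_eq (h ξ hξ).1]
      apply div_nonpos_of_nonpos_of_nonneg
      · nlinarith [sq_nonneg ξ]
      · positivity)
  linarith

lemma avc_triv {a x y M : ℝ} (hxy : x ≤ y) (hM : ∀ ξ ∈ Set.Icc x y, √ξ ≤ M) :
    |∫ ξ in x..y, avcF a ξ| ≤ M * (y - x) := by
  have := intervalIntegral.norm_integral_le_of_norm_le_const (a := x) (b := y) (C := M)
    (f := avcF a) (by
      intro ξ hξ
      rw [Set.uIoc_of_le hxy] at hξ
      have h1 := hM ξ (Set.Ioc_subset_Icc_self hξ)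
      rw [avcF, Real.norm_eq_abs, abs_mul, abs_of_nonneg (Real.sqrt_nonneg _)]
      have := Real.abs_sin_le_one (a * ξ + ξ ^ 3)
      nlinarith [Real.sqrt_nonneg ξ])
  rwa [Real.norm_eq_abs, abs_of_nonneg (sub_nonneg.2 hxy)] at this

lemma avc_add (a x y z : ℝ) :
    |∫ ξ in x..z, avcF a ξ| ≤ |∫ ξ in x..y, avcF a ξ| + |∫ ξ in y..z, avcF a ξ| := by
  rw [← intervalIntegral.integral_add_adjacent_intervals
    ((avcF_cont a).intervalIntegrable x y) ((avcF_cont a).intervalIntegrable y z)]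
  exact abs_add_le _ _

/-- Uniform bound for large R. -/
lemma avc_bound (a : ℝ) : ∃ R₀ : ℝ, ∀ R ≥ R₀, |∫ ξ in (0 : ℝ)..R, avcF a ξ| ≤ 20 := by
  rcases le_or_gt (-16) a with ha | ha
  · refine ⟨4, fun R hR => ?_⟩
    have h1 := avc_add a 0 4 R
    have h2 := avc_triv (a := a) (x := 0) (y := 4) (M := 2) (by norm_num) (fun ξ hξ => by
      rw [Real.sqrt_le_left (by norm_num)]; linarith [hξ.2])
    have h3 := avc_tail (a := a) (x := 4) (y := R) le_rfl (by linarith) hR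
    norm_num at h2 h3
    linarith
  · obtain ⟨c, hc, hca⟩ : ∃ c : ℝ, 0 < c ∧ a = -3 * (c ^ 2) ^ 2 := by
      refine ⟨√√(-a / 3), by
        apply Real.sqrt_pos.2; apply Real.sqrt_pos.2; linarith, ?_⟩
      rw [Real.sq_sqrt (Real.sqrt_nonneg _), Real.sq_sqrt (by linarith)]
      ring
    have hb : 2 ≤ c ^ 2 := by nlinarith [sq_nonneg (c ^ 2 - 2), sq_nonneg c]
    have hc1 : 1 ≤ c := by nlinarith
    have hd1 : 1 / c ≤ 1 := by rw [div_le_one hc]; exact hc1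
    have hd0 : 0 < 1 / c := by positivity
    have hdc : 1 / c * c = 1 := by field_simp
    generalize 1 / c = d at *
    have ha0 : a ≤ 0 := by linarith
    refine ⟨c ^ 2 + d, fun R hR => ?_⟩
    have s1 := avc_add a 0 1 R
    have s2 := avc_add a 1 (c ^ 2 - d) R
    have s3 := avc_add a (c ^ 2 - d) (c ^ 2 + d) R
    have t1 := avc_triv (a := a) (x := 0) (y := 1) (M := 1) (by norm_num) (fun ξ hξ => by
      rw [Real.sqrt_le_left (by norm_num)]; linarith [hξ.2])
    have t3 := avc_triv (a := a) (x := c ^ 2 - d) (y := c ^ 2 + d) (M := 2 * c) (by linarith)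
      (fun ξ hξ => by
        rw [Real.sqrt_le_left (by positivity)]; nlinarith [hξ.2])
    have t2 := avc_mono (a := a) (x := 1) (y := c ^ 2 - d) (by linarith) ha0 (fun ξ hξ => by
      have h0 : 0 < ξ := by linarith [hξ.1]
      refine ⟨h0, ?_⟩
      have : ξ < c ^ 2 := by linarith [hξ.2]
      apply ne_of_lt
      nlinarith)
    have t4 := avc_mono (a := a) (x := c ^ 2 + d) (y := R) hR ha0 (fun ξ hξ => by
      have h0 : 0 < ξ := by linarith [hξ.1]
      refine ⟨h0, ?_⟩
      have : c ^ 2 < ξ := by linarith [hξ.1]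
      apply ne_of_gt
      nlinarith)
    have neg : ∀ ξ, 1 ≤ ξ → ξ < c ^ 2 → avcG a ξ ≤ 0 := by
      intro ξ h1 h2
      apply div_nonpos_of_nonneg_of_nonpos (Real.sqrt_nonneg _)
      nlinarith
    have pos : ∀ ξ, c ^ 2 < ξ → 0 ≤ avcG a ξ := by
      intro ξ h2
      apply div_nonneg (Real.sqrt_nonneg _)
      nlinarith
    have n1 := neg 1 le_rfl (by linarith)
    have n2 := neg (c ^ 2 - d) (by linarith) (by linarith)
    have p1 := pos (c ^ 2 + d) (by linarith)
    have p2 := pos R (by linarith)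
    rw [abs_of_nonpos n1, abs_of_nonpos n2] at t2
    rw [abs_of_nonneg p1, abs_of_nonneg p2] at t4
    have v2 : -avcG a (c ^ 2 - d) ≤ 1 := by
      have hs : √(c ^ 2 - d) ≤ c := by
        rw [Real.sqrt_le_left hc.le]; linarith
      have e : 3 * (c ^ 2 - d) ^ 2 + a = -(3 * d * (2 * c ^ 2 - d)) := by rw [hca]; ring
      have hp : 0 < 3 * d * (2 * c ^ 2 - d) := by
        have : 0 < 2 * c ^ 2 - d := by linarith
        positivity
      unfold avcG
      rw [e, div_neg, neg_neg, div_le_one hp]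
      have : d * c ^ 2 = c := by rw [pow_two, ← mul_assoc, hdc, one_mul]
      nlinarith
    have v4 : avcG a (c ^ 2 + d) ≤ 1 := by
      have hs : √(c ^ 2 + d) ≤ 2 * c := by
        rw [Real.sqrt_le_left (by linarith)]; nlinarith
      have e : 3 * (c ^ 2 + d) ^ 2 + a = 3 * d * (2 * c ^ 2 + d) := by rw [hca]; ring
      unfold avcG
      rw [e, div_le_one (by positivity)]
      have : d * c ^ 2 = c := by rw [pow_two, ← mul_assoc, hdc, one_mul]
      nlinarith
    have w : 2 * c * (c ^ 2 + d - (c ^ 2 - d)) = 4 := by linear_combination 4 * hdc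
    rw [w] at t3
    linarith

lemma avc_lim (a : ℝ) : ∃ L : ℝ,
    Tendsto (fun R : ℝ => ∫ ξ in (0 : ℝ)..R, avcF a ξ) atTop (𝓝 L) ∧ |L| ≤ 20 := by
  have hc : Cauchy (map (fun R : ℝ => ∫ ξ in (0 : ℝ)..R, avcF a ξ) atTop) := by
    rw [Metric.cauchy_iff]
    refine ⟨inferInstance, fun ε hε => ?_⟩
    set N : ℝ := max (max 4 |a|) (3 / ε) with hN
    have hN1 : 4 ≤ N := (le_max_left _ _).trans (le_max_left _ _)
    have hN2 : |a| ≤ N := (le_max_right _ _).trans (le_max_left _ _)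
    have hN3 : 3 / ε ≤ N := le_max_right _ _
    have main : ∀ x y, N ≤ x → x ≤ y →
        |(∫ ξ in (0 : ℝ)..y, avcF a ξ) - ∫ ξ in (0 : ℝ)..x, avcF a ξ| < ε := by
      intro x y hx hxy
      rw [intervalIntegral.integral_interval_sub_left ((avcF_cont a).intervalIntegrable _ _)
        ((avcF_cont a).intervalIntegrable _ _)]
      refine (avc_tail (by linarith) ?_ hxy).trans_lt ?_
      · nlinarith [neg_abs_le a, le_abs_self a]
      · rw [div_le_iff₀ hε] at hN3
        rw [div_lt_iff₀ (by linarith)]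
        nlinarith
    refine ⟨_, image_mem_map (Ici_mem_atTop N), ?_⟩
    rintro _ ⟨x, hx, rfl⟩ _ ⟨y, hy, rfl⟩
    rw [Real.dist_eq]
    rcases le_total x y with h | h
    · rw [abs_sub_comm]; exact main x y hx h
    · exact main y x hy h
  obtain ⟨L, hL⟩ := CompleteSpace.complete hc
  refine ⟨L, hL, ?_⟩
  obtain ⟨R₀, h⟩ := avc_bound a
  exact le_of_tendsto (Tendsto.abs hL) (eventually_atTop.2 ⟨R₀, h⟩)

lemma avc_scaled {t : ℝ} (ht : 0 < t) (a : ℝ) : ∃ L : ℝ,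
    Tendsto (fun R : ℝ => ∫ ξ in (0 : ℝ)..R, √ξ * Real.sin (a * ξ + t * ξ ^ 3)) atTop (𝓝 L) ∧
      |L| ≤ 20 * t ^ (-(1 : ℝ) / 2) := by
  set s : ℝ := t ^ ((1 : ℝ) / 3) with hs
  have s0 : 0 < s := Real.rpow_pos_of_pos ht _
  have s3 : s ^ 3 = t := by
    rw [hs, ← Real.rpow_natCast, ← Real.rpow_mul ht.le]; norm_num
  have ss : (√s * s)⁻¹ = t ^ (-(1 : ℝ) / 2) := by
    rw [Real.sqrt_eq_rpow, hs, ← Real.rpow_mul ht.le, ← Real.rpow_add ht, ← Real.rpow_neg ht.le]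
    norm_num
  have hss : 0 < √s := Real.sqrt_pos.2 s0
  obtain ⟨L, hL, hb⟩ := avc_lim (a / s)
  refine ⟨(√s * s)⁻¹ * L, ?_, ?_⟩
  · have h1 : Tendsto (fun R : ℝ => s * R) atTop atTop := tendsto_id.const_mul_atTop s0
    refine ((hL.comp h1).const_mul (√s * s)⁻¹).congr fun R => ?_
    have h2 := intervalIntegral.integral_comp_mul_left (a := 0) (b := R) (avcF (a / s)) s0.ne'
    rw [mul_zero, smul_eq_mul] at h2
    have h3 : ∫ ξ in (0 : ℝ)..R, avcF (a / s) (s * ξ) =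
        √s * ∫ ξ in (0 : ℝ)..R, √ξ * Real.sin (a * ξ + t * ξ ^ 3) := by
      rw [← intervalIntegral.integral_const_mul]
      congr 1
      ext ξ
      rw [avcF, Real.sqrt_mul s0.le, ← s3]
      have : a / s * (s * ξ) + (s * ξ) ^ 3 = a * ξ + s ^ 3 * ξ ^ 3 := by field_simp
      rw [this]; ring
    rw [h3] at h2
    simp only [Function.comp]
    rw [mul_inv, mul_assoc, ← h2, inv_mul_cancel_left₀ hss.ne']
  · rw [abs_mul, ss, abs_of_pos (Real.rpow_pos_of_pos ht _)]
    have := Real.rpow_pos_of_pos ht (-(1 : ℝ) / 2)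
    nlinarith

lemma avc_real {t : ℝ} (ht : t ≠ 0) (a : ℝ) : ∃ L : ℝ,
    Tendsto (fun R : ℝ => ∫ ξ in (0 : ℝ)..R, √ξ * Real.sin (a * ξ + t * ξ ^ 3)) atTop (𝓝 L) ∧
      |L| ≤ 20 * |t| ^ (-(1 : ℝ) / 2) := by
  rcases lt_or_gt_of_ne ht with h | h
  · obtain ⟨L, hL, hb⟩ := avc_scaled (t := -t) (by linarith) (-a)
    refine ⟨-L, hL.neg.congr fun R => ?_, ?_⟩
    · rw [← intervalIntegral.integral_neg]
      congr 1
      ext ξ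
      have : -a * ξ + -t * ξ ^ 3 = -(a * ξ + t * ξ ^ 3) := by ring
      rw [this, Real.sin_neg]; ring
    · rwa [abs_neg, abs_of_neg h]
  · rw [abs_of_pos h]; exact avc_scaled h a

lemma avc_fold (a t R : ℝ) (hR : 0 ≤ R) :
    (∫ ξ in Set.Ioo (-R) R, ((Real.sign ξ * |ξ| ^ ((1 : ℝ) / 2) : ℝ) : ℂ) *
      Complex.exp (Complex.I * ((a * ξ + t * ξ ^ 3 : ℝ) : ℂ))) =
    2 * Complex.I * ((∫ ξ in (0 : ℝ)..R, √ξ * Real.sin (a * ξ + t * ξ ^ 3) : ℝ) : ℂ) := by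
  set f : ℝ → ℂ := fun ξ => ((Real.sign ξ * |ξ| ^ ((1 : ℝ) / 2) : ℝ) : ℂ) *
      Complex.exp (Complex.I * ((a * ξ + t * ξ ^ 3 : ℝ) : ℂ)) with hf
  set g : ℝ → ℂ := fun ξ => ((√ξ : ℝ) : ℂ) *
      Complex.exp (Complex.I * ((a * ξ + t * ξ ^ 3 : ℝ) : ℂ)) with hg
  set k : ℝ → ℂ := fun ξ => -(((√ξ : ℝ) : ℂ) *
      Complex.exp (Complex.I * ((-(a * ξ + t * ξ ^ 3) : ℝ) : ℂ))) with hk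
  have gc : Continuous g := by fun_prop
  have kc : Continuous k := by fun_prop
  have e1 : ∀ ξ, 0 ≤ ξ → f ξ = g ξ := by
    intro ξ h
    rcases h.eq_or_lt with rfl | h
    · simp [hf, hg]
    · simp only [hf, hg]
      rw [Real.sign_of_pos h, abs_of_pos h, Real.sqrt_eq_rpow, one_mul]
  have e2 : ∀ ξ, 0 ≤ ξ → f (-ξ) = k ξ := by
    intro ξ h
    rcases h.eq_or_lt with rfl | h
    · simp [hf, hk]
    · simp only [hf, hk]
      rw [Real.sign_of_neg (by linarith), abs_neg, abs_of_pos h, Real.sqrt_eq_rpow]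
      have : a * -ξ + t * (-ξ) ^ 3 = -(a * ξ + t * ξ ^ 3) := by ring
      rw [this]
      push_cast; ring
  have i1 : IntervalIntegrable f volume 0 R := by
    apply (gc.intervalIntegrable 0 R).congr
    intro ξ hξ
    rw [Set.uIoc_of_le hR] at hξ
    exact (e1 ξ hξ.1.le).symm
  have i2 : IntervalIntegrable f volume (-R) 0 := by
    have kc' : Continuous fun ξ => k (-ξ) := by fun_prop
    apply (kc'.intervalIntegrable (-R) 0).congr
    intro ξ hξ
    rw [Set.uIoc_of_le (by linarith)] at hξ
    have := e2 (-ξ) (by linarith [hξ.2])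
    rw [neg_neg] at this
    exact this.symm
  rw [← integral_Ioc_eq_integral_Ioo, ← intervalIntegral.integral_of_le (by linarith),
    ← intervalIntegral.integral_add_adjacent_intervals i2 i1]
  have j2 : ∫ ξ in (-R)..0, f ξ = ∫ ξ in (0 : ℝ)..R, k ξ := by
    have := intervalIntegral.integral_comp_neg (a := 0) (b := R) f
    rw [neg_zero] at this
    rw [← this]
    apply intervalIntegral.integral_congr
    intro ξ hξ
    rw [Set.uIcc_of_le hR] at hξ
    exact e2 ξ hξ.1
  have j1 : ∫ ξ in (0 : ℝ)..R, f ξ = ∫ ξ in (0 : ℝ)..R, g ξ := by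
    apply intervalIntegral.integral_congr
    intro ξ hξ
    rw [Set.uIcc_of_le hR] at hξ
    exact e1 ξ hξ.1
  rw [j1, j2, ← intervalIntegral.integral_add (kc.intervalIntegrable _ _)
    (gc.intervalIntegrable _ _), ← intervalIntegral.integral_ofReal,
    ← intervalIntegral.integral_const_mul]
  congr 1
  ext ξ
  simp only [hg, hk]
  generalize a * ξ + t * ξ ^ 3 = p
  rw [mul_comm Complex.I, mul_comm Complex.I, Complex.exp_mul_I, Complex.exp_mul_I]
  push_cast
  rw [Complex.cos_neg, Complex.sin_neg]
  ring

theorem airy_vanDerCorput :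
    ∃ C : ℝ, 0 < C ∧ ∀ t : ℝ, t ≠ 0 → ∀ a : ℝ,
      ∃ L : ℂ,
        Tendsto
          (fun R : ℝ => ∫ ξ in Set.Ioo (-R) R,
            ((Real.sign ξ * |ξ| ^ ((1 : ℝ) / 2) : ℝ) : ℂ) *
              Complex.exp (Complex.I * ((a * ξ + t * ξ ^ 3 : ℝ) : ℂ)))
          atTop (𝓝 L)
        ∧ ‖L‖ ≤ C * |t| ^ (-(1 : ℝ) / 2) := by
  refine ⟨40, by norm_num, fun t ht a => ?_⟩
  obtain ⟨L, hL, hb⟩ := avc_real ht a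
  refine ⟨2 * Complex.I * (L : ℂ), ?_, ?_⟩
  · have h1 := ((Complex.continuous_ofReal.tendsto L).comp hL).const_mul (2 * Complex.I)
    refine h1.congr' ?_
    filter_upwards [eventually_ge_atTop 0] with R hR
    rw [avc_fold a t R hR]
    rfl
  · rw [norm_mul, norm_mul, Complex.norm_I, Complex.norm_real, Real.norm_eq_abs]
    norm_num at *
    linarith
end
end
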